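/- arXiv:1406.5158 — 7 statements merged into one kernel-verified Lean document; each statement's English description precedes it below -/
import Mathlib

section
/- There exists a ℂ-linear bijection T : F → F^{⊗1} such that T(e_∅) = e_{(∅,∅)} and, for all j ∈ ℤ and all x ∈ F: T(a_{2j+1} x) = ψ⁺_{−j−1}(T x) and T(a_{2j} x) = ψ⁻_{−j−1}(T x). (This is the boson-fermion correspondence of type D-A at the level of Fock spaces: the odd fermion modes of F^{⊗1/2} are identified with the ψ⁺-modes of F^{⊗1} and the even modes with the ψ⁻-modes, corresponding to (φ^D(z) − φ^D(−z))/2z ↦ ψ⁺(z²) and (φ^D(z) + φ^D(−z))/2 ↦ ψ⁻(z²).) -/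
noncomputable section

/-- The neutral fermion Fock space `F = F^{⊗1/2}`: the complex vector space with
basis `{e_S : S a finite subset of ℕ}`. -/
abbrev FockD : Type := Finset ℕ →₀ ℂ

/-- Basis vector `e_S`. -/
def eD (S : Finset ℕ) : FockD := Finsupp.single S 1

/-- Action of the fermion mode `a_m` on the basis vector `e_S`. -/
def aVec (m : ℤ) (S : Finset ℕ) : FockD :=
  if 0 ≤ m then
    if m.toNat ∈ S then 0
    else ((-1 : ℂ) ^ (S.filter (fun s => m.toNat < s)).card) • eD (insert m.toNat S)
  else
    if (-m - 1).toNat ∈ S then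
      ((-1 : ℂ) ^ (S.filter (fun s => (-m - 1).toNat < s)).card) • eD (S.erase ((-m - 1).toNat))
    else 0

/-- The fermion mode `a_m` as a linear operator on `F`. -/
def aOp (m : ℤ) : FockD →ₗ[ℂ] FockD :=
  Finsupp.lsum ℂ fun S => LinearMap.toSpanSingleton ℂ FockD (aVec m S)

/-- Fermionic normal ordered product `:a_i a_j:`. -/
def NO (i j : ℤ) : FockD →ₗ[ℂ] FockD :=
  if 0 ≤ i then (aOp i).comp (aOp j) else -((aOp j).comp (aOp i))

/-- Heisenberg operator `h_n = (1/2) ∑_{i∈ℤ} (−1)^{i+1} :a_i a_{−2n−1−i}:`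
(on each vector only finitely many summands are nonzero). -/
def hD (n : ℤ) (x : FockD) : FockD :=
  (1 / 2 : ℂ) • ∑ᶠ i : ℤ, ((-1 : ℂ) ^ (i + 1)) • NO i (-2 * n - 1 - i) x

/-- Virasoro operator `L^{1/2}_m = (1/2) ∑_{i∈ℤ} i · :a_i a_{−m−i−1}:`. -/
def LhalfD (m : ℤ) (x : FockD) : FockD :=
  (1 / 2 : ℂ) • ∑ᶠ i : ℤ, (i : ℂ) • NO i (-m - i - 1) x

/-- 2-point Virasoro operator `L¹_n = (1/2) ∑_{j∈ℤ} :h_j h_{n−j}:`, where the bosonic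
normal ordered product is `:h_j h_k: = h_j h_k` if `j ≤ k` and `h_k h_j` otherwise. -/
def L1D (n : ℤ) (x : FockD) : FockD :=
  (1 / 2 : ℂ) • ∑ᶠ j : ℤ, if j ≤ n - j then hD j (hD (n - j) x) else hD (n - j) (hD j x)

/-- Charge `c(S) = #{s ∈ S : s odd} − #{s ∈ S : s even}`. -/
def chg (S : Finset ℕ) : ℤ :=
  ((S.filter fun s => Odd s).card : ℤ) - ((S.filter fun s => Even s).card : ℤ)

/-- Charge-`n` component `F_{(n)}`: the span of the `e_S` with `c(S) = n`. -/
def FockComp (n : ℤ) : Submodule ℂ FockD :=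
  Submodule.span ℂ {x : FockD | ∃ S : Finset ℕ, chg S = n ∧ x = eD S}

/-- Index set of the vacuum-like vector `v_n`. -/
def vSet (n : ℤ) : Finset ℕ :=
  if 0 ≤ n then (Finset.range n.toNat).image fun i => 2 * i + 1
  else (Finset.range (-n).toNat).image fun i => 2 * i

/-- Vacuum-like vector `v_n` (`v_0 = e_∅`, `v_n = e_{{1,3,…,2n−1}}`,
`v_{−n} = e_{{0,2,…,2n−2}}` for `n > 0`). -/
def vD (n : ℤ) : FockD := eD (vSet n)

/-- The Fock space `F^{⊗1}` of a pair of charged free fermions: basis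
`{e_{(A,B)} : A, B finite subsets of ℕ}`. -/
abbrev FockA : Type := (Finset ℕ × Finset ℕ) →₀ ℂ

/-- Basis vector `e_{(A,B)}`. -/
def eA (A B : Finset ℕ) : FockA := Finsupp.single (A, B) 1

/-- Action of the mode `ψ⁺_m` on the basis vector `e_{(A,B)}`
(`ψ⁺_{−a−1}` creates, `ψ⁺_a` annihilates, `a ∈ ℕ`). -/
def psiPVec (m : ℤ) (p : Finset ℕ × Finset ℕ) : FockA :=
  if m < 0 then
    if (-m - 1).toNat ∈ p.1 then 0
    else ((-1 : ℂ) ^ (p.1.filter (fun x => (-m - 1).toNat < x)).card) •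
      eA (insert ((-m - 1).toNat) p.1) p.2
  else
    if m.toNat ∈ p.2 then
      ((-1 : ℂ) ^ (p.1.card + (p.2.filter (fun y => m.toNat < y)).card)) •
        eA p.1 (p.2.erase m.toNat)
    else 0

/-- Action of the mode `ψ⁻_m` on the basis vector `e_{(A,B)}`. -/
def psiMVec (m : ℤ) (p : Finset ℕ × Finset ℕ) : FockA :=
  if m < 0 then
    if (-m - 1).toNat ∈ p.2 then 0
    else ((-1 : ℂ) ^ (p.1.card + (p.2.filter (fun y => (-m - 1).toNat < y)).card)) •
      eA p.1 (insert ((-m - 1).toNat) p.2)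
  else
    if m.toNat ∈ p.1 then
      ((-1 : ℂ) ^ (p.1.filter (fun x => m.toNat < x)).card) • eA (p.1.erase m.toNat) p.2
    else 0

/-- The mode `ψ⁺_m` as a linear operator on `F^{⊗1}`. -/
def psiP (m : ℤ) : FockA →ₗ[ℂ] FockA :=
  Finsupp.lsum ℂ fun p => LinearMap.toSpanSingleton ℂ FockA (psiPVec m p)

/-- The mode `ψ⁻_m` as a linear operator on `F^{⊗1}`. -/
def psiM (m : ℤ) : FockA →ₗ[ℂ] FockA :=
  Finsupp.lsum ℂ fun p => LinearMap.toSpanSingleton ℂ FockA (psiMVec m p)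

/-- Heisenberg operator `h^A_n = ∑_{j∈ℤ} :ψ⁺_j ψ⁻_{n−j−1}:` on `F^{⊗1}`, where
`:ψ⁺_j ψ⁻_k: = ψ⁺_j ψ⁻_k` for `j ≤ −1` and `= −ψ⁻_k ψ⁺_j` for `j ≥ 0`. -/
def hA (n : ℤ) (x : FockA) : FockA :=
  ∑ᶠ j : ℤ, if j ≤ -1 then psiP j (psiM (n - j - 1) x) else -(psiM (n - j - 1) (psiP j x))

/-!
Both spaces are fermionic Fock spaces over a linearly ordered set of modes, the basis vector `e_S`
arising from the vacuum by the creation operators of `S`, largest mode leftmost. For `F` the modes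
are `ℕ`; for `F^{⊗1}` they are two copies of `ℕ`, all modes of `B` below all modes of `A`. Changing
the order of the modes permutes anticommuting factors, so sending `e_S` to `(-1) ^ inv(S)` times the
relabelled vector, `inv(S)` being the number of pairs in `S` whose order is reversed, intertwines
the creation and annihilation operators. Apply this to the bijection sending the even modes to the
copy of `B` and the odd modes to the copy of `A`.
-/

section Fock

open scoped Finset

variable (R : Type*) [CommRing R] {I J : Type*} [LinearOrder I] [LinearOrder J]

/-- The fermionic Fock space over `R` with modes indexed by `I`; `single S 1` is the
vacuum `single ∅ 1` acted on by the creation operators of `S`, largest mode leftmost. -/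
abbrev FermionFock (I : Type*) : Type _ := Finset I →₀ R

/-- The operator creating the mode `i`, with sign `(-1)` to the number of occupied larger modes. -/
def creation (i : I) : FermionFock R I →ₗ[R] FermionFock R I :=
  Finsupp.linearCombination R fun S =>
    if i ∈ S then 0 else Finsupp.single (insert i S) ((-1) ^ #{s ∈ S | i < s})

/-- The operator annihilating the mode `i`, with sign `(-1)` to the number of occupied larger
modes. -/
def annihilation (i : I) : FermionFock R I →ₗ[R] FermionFock R I :=
  Finsupp.linearCombination R fun S =>
    if i ∈ S then Finsupp.single (S.erase i) ((-1) ^ #{s ∈ S | i < s}) else 0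

variable {R}

theorem creation_single (i : I) (S : Finset I) (r : R) :
    creation R i (Finsupp.single S r) =
      if i ∈ S then 0 else Finsupp.single (insert i S) (r * (-1) ^ #{s ∈ S | i < s}) := by
  simp [creation]

theorem annihilation_single (i : I) (S : Finset I) (r : R) :
    annihilation R i (Finsupp.single S r) =
      if i ∈ S then Finsupp.single (S.erase i) (r * (-1) ^ #{s ∈ S | i < s}) else 0 := by
  simp [annihilation]

theorem annihilation_single_insert {i : I} {S : Finset I} (hi : i ∉ S) (r : R) :
    annihilation R i (Finsupp.single (insert i S) r) =
      Finsupp.single S (r * (-1) ^ #{s ∈ S | i < s}) := by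
  rw [annihilation_single, if_pos (Finset.mem_insert_self i S), Finset.erase_insert hi,
    Finset.filter_insert, if_neg (lt_irrefl i)]

/-- The number of pairs of elements of `S` whose order is reversed by `f`. -/
def inversionCount (f : I → J) (S : Finset I) : ℕ :=
  #{p ∈ S ×ˢ S | p.1 < p.2 ∧ f p.2 < f p.1}

theorem inversionCount_insert (f : I → J) {i : I} {S : Finset I} (hi : i ∉ S) :
    inversionCount f (insert i S) =
      inversionCount f S + #{s ∈ S | i < s ∧ f s < f i} + #{s ∈ S | s < i ∧ f i < f s} := by
  simp only [inversionCount, Finset.card_filter, Finset.sum_product, Finset.sum_insert hi,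
    Finset.sum_add_distrib, lt_irrefl, false_and, if_false, zero_add]
  ring

theorem inversionCount_insert_add_card {f : I → J} (hf : f.Injective) {i : I} {S : Finset I}
    (hi : i ∉ S) :
    inversionCount f (insert i S) + 2 * #{s ∈ S | i < s ∧ f i < f s} =
      inversionCount f S + #{s ∈ S | i < s} + #{s ∈ S | f i < f s} := by
  have card_larger : #{s ∈ S | i < s} =
      #{s ∈ S | i < s ∧ f i < f s} + #{s ∈ S | i < s ∧ f s < f i} := by
    simp only [Finset.card_filter, ← Finset.sum_add_distrib]
    refine Finset.sum_congr rfl fun s _ => ?_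
    have h_inj := hf.eq_iff (a := i) (b := s)
    grind
  have card_image_larger : #{s ∈ S | f i < f s} =
      #{s ∈ S | i < s ∧ f i < f s} + #{s ∈ S | s < i ∧ f i < f s} := by
    simp only [Finset.card_filter, ← Finset.sum_add_distrib]
    refine Finset.sum_congr rfl fun s hs => ?_
    grind
  rw [inversionCount_insert f hi, card_larger, card_image_larger]
  ring

theorem neg_one_pow_inversionCount_insert {f : I → J} (hf : f.Injective) {i : I} {S : Finset I}
    (hi : i ∉ S) :
    (-1 : R) ^ inversionCount f (insert i S) =
      (-1) ^ inversionCount f S * (-1) ^ #{s ∈ S | i < s} * (-1) ^ #{s ∈ S | f i < f s} := by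
  rw [← pow_add, ← pow_add, ← inversionCount_insert_add_card hf hi, pow_add, pow_mul,
    neg_one_sq, one_pow, mul_one]

variable (R) in
/-- The isomorphism of Fock spaces induced by a relabelling `e` of the modes. The sign accounts for
reordering the creation operators, since `e` need not be monotone. -/
def fockRelabel (e : I ≃ J) : FermionFock R I ≃ₗ[R] FermionFock R J :=
  (Finsupp.basisSingleOne.equiv
    (Finsupp.basisSingleOne.unitsSMul fun S => (-1) ^ inversionCount e S) (Equiv.refl _)).trans
    (Finsupp.domLCongr e.finsetCongr)

theorem fockRelabel_single (e : I ≃ J) (S : Finset I) (r : R) :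
    fockRelabel R e (Finsupp.single S r) =
      Finsupp.single (S.map e.toEmbedding) (r * (-1) ^ inversionCount e S) := by
  have h_one : fockRelabel R e (Finsupp.single S 1) =
      Finsupp.single (S.map e.toEmbedding) ((-1) ^ inversionCount e S) := by
    rw [fockRelabel, LinearEquiv.trans_apply, ← congrFun Finsupp.coe_basisSingleOne S,
      Module.Basis.equiv_apply]
    simp [Module.Basis.unitsSMul_apply, Units.smul_def]
  rw [← mul_one r, ← smul_eq_mul, ← Finsupp.smul_single, map_smul, h_one]
  simp

theorem fockRelabel_creation (e : I ≃ J) (i : I) (x : FermionFock R I) :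
    fockRelabel R e (creation R i x) = creation R (e i) (fockRelabel R e x) := by
  induction x using Finsupp.induction_linear with
  | zero => simp
  | add x y hx hy => simp only [map_add, hx, hy]
  | single S r =>
    by_cases hi : i ∈ S
    · simp only [creation_single, fockRelabel_single, hi, if_true, Finset.mem_map_equiv,
        e.symm_apply_apply, map_zero]
    · have h_sq : (-1 : R) ^ #{s ∈ S | i < s} * (-1) ^ #{s ∈ S | i < s} = 1 := by simp [← mul_pow]
      simp only [creation_single, fockRelabel_single, hi, if_false, Finset.mem_map_equiv,
        e.symm_apply_apply, Finset.filter_map, Finset.card_map, Finset.map_insert,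
        Function.comp_def, Equiv.coe_toEmbedding, neg_one_pow_inversionCount_insert e.injective hi]
      congr 1
      linear_combination (r * (-1) ^ inversionCount e S * (-1) ^ #{s ∈ S | e i < e s}) * h_sq

theorem fockRelabel_annihilation (e : I ≃ J) (i : I) (x : FermionFock R I) :
    fockRelabel R e (annihilation R i x) = annihilation R (e i) (fockRelabel R e x) := by
  induction x using Finsupp.induction_linear with
  | zero => simp
  | add x y hx hy => simp only [map_add, hx, hy]
  | single S r =>
    by_cases hi : i ∈ S
    · obtain ⟨U, hU, rfl⟩ : ∃ U, i ∉ U ∧ insert i U = S :=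
        ⟨S.erase i, Finset.notMem_erase i S, Finset.insert_erase hi⟩
      have h_map : e i ∉ U.map e.toEmbedding := by simpa using hU
      have h_sq : (-1 : R) ^ #{s ∈ U | e i < e s} * (-1) ^ #{s ∈ U | e i < e s} = 1 := by
        simp [← mul_pow]
      simp only [annihilation_single_insert hU, annihilation_single_insert h_map,
        fockRelabel_single, Finset.filter_map, Finset.card_map, Finset.map_insert,
        Function.comp_def, Equiv.coe_toEmbedding, neg_one_pow_inversionCount_insert e.injective hU]
      congr 1
      linear_combination (-r * (-1) ^ inversionCount e U * (-1) ^ #{s ∈ U | i < s}) * h_sq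
    · simp only [annihilation_single, fockRelabel_single, hi, if_false, Finset.mem_map_equiv,
        e.symm_apply_apply, map_zero]

end Fock

section LexSum

open scoped Finset

variable {α β : Type*}

/-- Finite subsets of the ordered sum `α ⊕ₗ β` are pairs of finite subsets of `α` and `β`. -/
def lexDisjSum : Finset α × Finset β ≃ Finset (α ⊕ₗ β) :=
  Finset.sumEquiv.symm.toEquiv.trans toLex.finsetCongr

theorem lexDisjSum_apply (s : Finset α) (t : Finset β) :
    lexDisjSum (s, t) = (s.disjSum t).map toLex.toEmbedding :=
  rfl

@[simp]
theorem inl_mem_lexDisjSum {a : α} {s : Finset α} {t : Finset β} :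
    toLex (Sum.inl a) ∈ lexDisjSum (s, t) ↔ a ∈ s := by
  simp [lexDisjSum_apply]

@[simp]
theorem inr_mem_lexDisjSum {b : β} {s : Finset α} {t : Finset β} :
    toLex (Sum.inr b) ∈ lexDisjSum (s, t) ↔ b ∈ t := by
  simp [lexDisjSum_apply]

theorem lexDisjSum_insert_left [DecidableEq α] [DecidableEq (α ⊕ₗ β)] (a : α) (s : Finset α)
    (t : Finset β) :
    lexDisjSum (insert a s, t) = insert (toLex (Sum.inl a)) (lexDisjSum (s, t)) := by
  ext x
  induction x using Lex.rec with | _ x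
  cases x <;> simp

theorem lexDisjSum_insert_right [DecidableEq β] [DecidableEq (α ⊕ₗ β)] (b : β) (s : Finset α)
    (t : Finset β) :
    lexDisjSum (s, insert b t) = insert (toLex (Sum.inr b)) (lexDisjSum (s, t)) := by
  ext x
  induction x using Lex.rec with | _ x
  cases x <;> simp

theorem lexDisjSum_erase_left [DecidableEq α] [DecidableEq (α ⊕ₗ β)] (a : α) (s : Finset α)
    (t : Finset β) :
    lexDisjSum (s.erase a, t) = (lexDisjSum (s, t)).erase (toLex (Sum.inl a)) := by
  ext x
  induction x using Lex.rec with | _ x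
  cases x <;> simp

theorem lexDisjSum_erase_right [DecidableEq β] [DecidableEq (α ⊕ₗ β)] (b : β) (s : Finset α)
    (t : Finset β) :
    lexDisjSum (s, t.erase b) = (lexDisjSum (s, t)).erase (toLex (Sum.inr b)) := by
  ext x
  induction x using Lex.rec with | _ x
  cases x <;> simp

theorem card_filter_lexDisjSum (p : α ⊕ₗ β → Prop) [DecidablePred p] (s : Finset α)
    (t : Finset β) :
    #{x ∈ lexDisjSum (s, t) | p x} =
      #{a ∈ s | p (toLex (Sum.inl a))} + #{b ∈ t | p (toLex (Sum.inr b))} := by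
  simp only [Finset.card_filter, lexDisjSum_apply, Finset.sum_map, Finset.sum_disjSum,
    Equiv.coe_toEmbedding]

end LexSum

theorem aOp_single (m : ℤ) (S : Finset ℕ) (r : ℂ) :
    aOp m (Finsupp.single S r) = r • aVec m S := by
  simp [aOp]

theorem aOp_natCast (n : ℕ) : aOp n = creation ℂ n :=
  Finsupp.lhom_ext fun S r => by
    simp [aOp_single, aVec, eD, creation_single, -Finsupp.single_mul]

theorem aOp_neg_natCast_sub_one (n : ℕ) : aOp (-n - 1) = annihilation ℂ n := by
  have h_neg : ¬0 ≤ -(n : ℤ) - 1 := by lia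
  refine Finsupp.lhom_ext fun S r => ?_
  rw [annihilation_single, aOp_single, aVec, if_neg h_neg]
  simp [eD, -Finsupp.single_mul]

/-- The vectors `e_(A,B)` of `F^{⊗1}` as Fock vectors for the ordered sum `ℕ ⊕ₗ ℕ`. The modes in
`B` form the lower copy of `ℕ`, since the signs of `ψ^±` count all of `A` as larger. -/
def chargedFock : FermionFock ℂ (ℕ ⊕ₗ ℕ) ≃ₗ[ℂ] FockA :=
  Finsupp.domLCongr (lexDisjSum.symm.trans (Equiv.prodComm _ _))

theorem chargedFock_single_lexDisjSum (A B : Finset ℕ) (r : ℂ) :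
    chargedFock (Finsupp.single (lexDisjSum (B, A)) r) = Finsupp.single (A, B) r := by
  simp [chargedFock]

theorem chargedFock_symm_single (A B : Finset ℕ) (r : ℂ) :
    chargedFock.symm (Finsupp.single (A, B) r) = Finsupp.single (lexDisjSum (B, A)) r := by
  rw [LinearEquiv.symm_apply_eq, chargedFock_single_lexDisjSum]

theorem psiP_single (m : ℤ) (p : Finset ℕ × Finset ℕ) (r : ℂ) :
    psiP m (Finsupp.single p r) = r • psiPVec m p := by
  simp [psiP]

theorem psiM_single (m : ℤ) (p : Finset ℕ × Finset ℕ) (r : ℂ) :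
    psiM m (Finsupp.single p r) = r • psiMVec m p := by
  simp [psiM]

theorem psiP_neg_natCast_sub_one (a : ℕ) :
    psiP (-a - 1) = chargedFock.conj (creation ℂ (toLex (Sum.inr a))) := by
  have h_neg : -(a : ℤ) - 1 < 0 := by lia
  refine Finsupp.lhom_ext fun (A, B) r => ?_
  rw [LinearEquiv.conj_apply_apply, chargedFock_symm_single, creation_single,
    ← lexDisjSum_insert_right, card_filter_lexDisjSum, apply_ite chargedFock,
    chargedFock_single_lexDisjSum, psiP_single, psiPVec, if_pos h_neg]
  simp [eA, -Finsupp.single_mul]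

theorem psiP_natCast (b : ℕ) :
    psiP b = chargedFock.conj (annihilation ℂ (toLex (Sum.inl b))) := by
  refine Finsupp.lhom_ext fun (A, B) r => ?_
  rw [LinearEquiv.conj_apply_apply, chargedFock_symm_single, annihilation_single,
    ← lexDisjSum_erase_left, card_filter_lexDisjSum, apply_ite chargedFock,
    chargedFock_single_lexDisjSum, psiP_single, psiPVec]
  simp [eA, -Finsupp.single_mul, add_comm]

theorem psiM_neg_natCast_sub_one (b : ℕ) :
    psiM (-b - 1) = chargedFock.conj (creation ℂ (toLex (Sum.inl b))) := by
  have h_neg : -(b : ℤ) - 1 < 0 := by lia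
  refine Finsupp.lhom_ext fun (A, B) r => ?_
  rw [LinearEquiv.conj_apply_apply, chargedFock_symm_single, creation_single,
    ← lexDisjSum_insert_left, card_filter_lexDisjSum, apply_ite chargedFock,
    chargedFock_single_lexDisjSum, psiM_single, psiMVec, if_pos h_neg]
  simp [eA, -Finsupp.single_mul, add_comm]

theorem psiM_natCast (a : ℕ) :
    psiM a = chargedFock.conj (annihilation ℂ (toLex (Sum.inr a))) := by
  refine Finsupp.lhom_ext fun (A, B) r => ?_
  rw [LinearEquiv.conj_apply_apply, chargedFock_symm_single, annihilation_single,
    ← lexDisjSum_erase_right, card_filter_lexDisjSum, apply_ite chargedFock,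
    chargedFock_single_lexDisjSum, psiM_single, psiMVec]
  simp [eA, -Finsupp.single_mul, add_comm]

/-- The relabelling of the modes of `F`: `2 * b` becomes the mode `b` of the lower copy of `ℕ` and
`2 * a + 1` the mode `a` of the upper copy. -/
def evenOddSplit : ℕ ≃ ℕ ⊕ₗ ℕ :=
  Equiv.natSumNatEquivNat.symm.trans toLex

theorem evenOddSplit_two_mul (n : ℕ) : evenOddSplit (2 * n) = toLex (Sum.inl n) := by
  rw [evenOddSplit, Equiv.trans_apply, toLex_inj, Equiv.symm_apply_eq]
  simp

theorem evenOddSplit_two_mul_add_one (n : ℕ) :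
    evenOddSplit (2 * n + 1) = toLex (Sum.inr n) := by
  rw [evenOddSplit, Equiv.trans_apply, toLex_inj, Equiv.symm_apply_eq]
  simp

/-- The boson-fermion correspondence `T : F → F^{⊗1}` of type D-A. -/
def bosonFermionDA : FockD ≃ₗ[ℂ] FockA :=
  (fockRelabel ℂ evenOddSplit).trans chargedFock

theorem bosonFermionDA_vacuum : bosonFermionDA (eD ∅) = eA ∅ ∅ := by
  rw [eA, ← chargedFock_single_lexDisjSum]
  simp [bosonFermionDA, eD, fockRelabel_single, inversionCount, lexDisjSum_apply]

theorem bosonFermionDA_creation (n : ℕ) (x : FockD) :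
    bosonFermionDA (creation ℂ n x) =
      chargedFock.conj (creation ℂ (evenOddSplit n)) (bosonFermionDA x) := by
  simp [bosonFermionDA, fockRelabel_creation]

theorem bosonFermionDA_annihilation (n : ℕ) (x : FockD) :
    bosonFermionDA (annihilation ℂ n x) =
      chargedFock.conj (annihilation ℂ (evenOddSplit n)) (bosonFermionDA x) := by
  simp [bosonFermionDA, fockRelabel_annihilation]

theorem bosonFermionDA_odd (j : ℤ) (x : FockD) :
    bosonFermionDA (aOp (2 * j + 1) x) = psiP (-j - 1) (bosonFermionDA x) := by
  obtain ⟨n, rfl | rfl⟩ : ∃ n : ℕ, j = n ∨ j = -n - 1 := ⟨j.toNat + (-j - 1).toNat, by lia⟩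
  · have h_odd : 2 * (n : ℤ) + 1 = (2 * n + 1 : ℕ) := by push_cast; rfl
    rw [h_odd, aOp_natCast, bosonFermionDA_creation, evenOddSplit_two_mul_add_one,
      psiP_neg_natCast_sub_one]
  · have h_odd : 2 * (-(n : ℤ) - 1) + 1 = -(2 * n : ℕ) - 1 := by push_cast; ring
    have h_nat : -(-(n : ℤ) - 1) - 1 = n := by ring
    rw [h_odd, h_nat, aOp_neg_natCast_sub_one, bosonFermionDA_annihilation, evenOddSplit_two_mul,
      psiP_natCast]

theorem bosonFermionDA_even (j : ℤ) (x : FockD) :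
    bosonFermionDA (aOp (2 * j) x) = psiM (-j - 1) (bosonFermionDA x) := by
  obtain ⟨n, rfl | rfl⟩ : ∃ n : ℕ, j = n ∨ j = -n - 1 := ⟨j.toNat + (-j - 1).toNat, by lia⟩
  · have h_even : 2 * (n : ℤ) = (2 * n : ℕ) := by push_cast; rfl
    rw [h_even, aOp_natCast, bosonFermionDA_creation, evenOddSplit_two_mul,
      psiM_neg_natCast_sub_one]
  · have h_even : 2 * (-(n : ℤ) - 1) = -(2 * n + 1 : ℕ) - 1 := by push_cast; ring
    have h_nat : -(-(n : ℤ) - 1) - 1 = n := by ring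
    rw [h_even, h_nat, aOp_neg_natCast_sub_one, bosonFermionDA_annihilation,
      evenOddSplit_two_mul_add_one, psiM_natCast]

/-- Boson-fermion correspondence of type D-A at the level of Fock spaces: there is a
ℂ-linear bijection `T : F^{⊗1/2} → F^{⊗1}` with `T(e_∅) = e_{(∅,∅)}` identifying the odd
fermion modes with the `ψ⁺`-modes and the even modes with the `ψ⁻`-modes:
`T(a_{2j+1} x) = ψ⁺_{−j−1}(T x)` and `T(a_{2j} x) = ψ⁻_{−j−1}(T x)` for all `j ∈ ℤ`. -/
theorem boson_fermion_correspondence_D_A :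
    ∃ T : FockD ≃ₗ[ℂ] FockA,
      T (eD ∅) = eA ∅ ∅ ∧
      ∀ (j : ℤ) (x : FockD),
        T (aOp (2 * j + 1) x) = psiP (-j - 1) (T x) ∧
        T (aOp (2 * j) x) = psiM (-j - 1) (T x) := by
  exact ⟨bosonFermionDA, bosonFermionDA_vacuum, fun j x =>
    ⟨bosonFermionDA_odd j x, bosonFermionDA_even j x⟩⟩
end
end

section
/- There exists a ℂ-linear bijection U : F → F^{⊗1} intertwining the two Heisenberg actions: U(h_n x) = h^A_n(U x) for all n ∈ ℤ and x ∈ F. (Thus, as modules for the Heisenberg algebra H_ℤ, the neutral fermion Fock space F^{⊗1/2} is isomorphic to the charged free fermion Fock space F^{⊗1}.) -/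
noncomputable section

/-! The charged modes are the neutral ones sorted by parity: `a_{2k+1}` plays the role of
`ψ⁺_{-k-1}` and `a_{2k}` that of `ψ⁻_{-k-1}`. On basis vectors this is the bijection
`(A, B) ↦ {2a + 1 : a ∈ A} ∪ {2b : b ∈ B}`, corrected by the sign of the permutation that moves
all odd modes in front of the even ones. In the sum defining `h_n`, the even and the odd indices
contribute equally because normal ordered products are antisymmetric, which absorbs the factor
`1/2` and leaves exactly the sum defining `h^A_n`. -/

theorem finsum_int_even_add_odd {M : Type*} [AddCommMonoid M] {f : ℤ → M}
    (hf : f.HasFiniteSupport) : ∑ᶠ i, f i = (∑ᶠ k, f (2 * k)) + ∑ᶠ k, f (2 * k + 1) := by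
  have even_injective : Function.Injective fun k : ℤ => 2 * k := fun k l h => by grind
  have odd_injective : Function.Injective fun k : ℤ => 2 * k + 1 := fun k l h => by grind
  have even_union_odd : {i : ℤ | Even i} ∪ {i | Odd i} = Set.univ :=
    Int.isCompl_even_odd.sup_eq_top
  rw [← finsum_mem_range even_injective, ← finsum_mem_range odd_injective,
    range_two_mul, range_two_mul_add_one,
    ← finsum_mem_union' Int.isCompl_even_odd.disjoint (hf.inter_of_right _) (hf.inter_of_right _),
    even_union_odd, finsum_mem_univ]

/-- The sign `(-1)^{#{s ∈ S : a < s}}` by which the mode `a` acts on the basis vector `e_S`,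
as a product over `S`. -/
def koszulSign {α : Type*} [LinearOrder α] (a : α) (S : Finset α) : ℂ :=
  ∏ s ∈ S, if a < s then -1 else 1

/-- The sign of moving the modes `A` in front of the modes `B`: the parity of the number of pairs
`a < b` with `a ∈ A` and `b ∈ B`. -/
def crossingSign {α : Type*} [LinearOrder α] (A B : Finset α) : ℂ :=
  ∏ a ∈ A, koszulSign a B

section Signs

theorem prod_ite_neg_one_mul_self {α : Type*} (p : α → Prop) [DecidablePred p] (S : Finset α) :
    (∏ s ∈ S, if p s then (-1 : ℂ) else 1) * (∏ s ∈ S, if p s then (-1 : ℂ) else 1) = 1 := by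
  rw [← Finset.prod_mul_distrib]
  exact Finset.prod_eq_one fun s _ => by split_ifs <;> norm_num

variable {α : Type*} [LinearOrder α]

theorem koszulSign_eq_neg_one_pow (a : α) (S : Finset α) :
    koszulSign a S = (-1) ^ (S.filter (a < ·)).card := by
  simp [koszulSign, Finset.prod_ite]

theorem koszulSign_mul_self (a : α) (S : Finset α) : koszulSign a S * koszulSign a S = 1 :=
  prod_ite_neg_one_mul_self (a < ·) S

theorem koszulSign_insert {b : α} {S : Finset α} (hb : b ∉ S) (a : α) :
    koszulSign a (insert b S) = (if a < b then -1 else 1) * koszulSign a S :=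
  Finset.prod_insert hb

theorem koszulSign_erase {b : α} {S : Finset α} (hb : b ∈ S) (a : α) :
    koszulSign a (S.erase b) = (if a < b then -1 else 1) * koszulSign a S := by
  rw [← Finset.insert_erase hb, koszulSign_insert (S.notMem_erase b), Finset.insert_erase hb]
  split_ifs <;> ring

theorem koszulSign_insert_self (a : α) (S : Finset α) :
    koszulSign a (insert a S) = koszulSign a S := by
  simp [koszulSign, Finset.prod_insert_of_eq_one_if_notMem]

theorem crossingSign_mul_self (A B : Finset α) : crossingSign A B * crossingSign A B = 1 := by
  rw [crossingSign, ← Finset.prod_mul_distrib]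
  exact Finset.prod_eq_one fun a _ => koszulSign_mul_self a B

theorem crossingSign_insert_left {a : α} {A : Finset α} (ha : a ∉ A) (B : Finset α) :
    crossingSign (insert a A) B = koszulSign a B * crossingSign A B :=
  Finset.prod_insert ha

theorem crossingSign_insert_right {b : α} {B : Finset α} (hb : b ∉ B) (A : Finset α) :
    crossingSign A (insert b B) = (∏ a ∈ A, if a < b then -1 else 1) * crossingSign A B := by
  simp only [crossingSign, koszulSign_insert hb, Finset.prod_mul_distrib]

end Signs

section NeutralModes

/-- The basis `e_S` of the neutral Fock space. -/
def basisD : Module.Basis (Finset ℕ) ℂ FockD := Finsupp.basisSingleOne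

theorem basisD_apply (S : Finset ℕ) : basisD S = eD S := by
  rw [basisD, Finsupp.coe_basisSingleOne, eD]

theorem FockD.hom_ext {M : Type*} [AddCommMonoid M] [Module ℂ M] {f g : FockD →ₗ[ℂ] M}
    (h : ∀ S, f (eD S) = g (eD S)) : f = g :=
  basisD.ext fun S => by simpa only [basisD_apply] using h S

theorem aOp_eD (m : ℤ) (S : Finset ℕ) : aOp m (eD S) = aVec m S := by
  simp [aOp, eD]

theorem aOp_natCast_eD_of_mem {m : ℕ} {S : Finset ℕ} (h : m ∈ S) : aOp m (eD S) = 0 := by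
  simp [aOp_eD, aVec, h]

theorem aOp_natCast_eD_of_notMem {m : ℕ} {S : Finset ℕ} (h : m ∉ S) :
    aOp m (eD S) = koszulSign m S • eD (insert m S) := by
  simp [aOp_eD, aVec, h, koszulSign_eq_neg_one_pow]

theorem aOp_negSucc_eD_of_notMem {m : ℕ} {S : Finset ℕ} (h : m ∉ S) :
    aOp (Int.negSucc m) (eD S) = 0 := by
  simp [aOp_eD, aVec, h, Int.neg_negSucc]

theorem aOp_negSucc_eD_of_mem {m : ℕ} {S : Finset ℕ} (h : m ∈ S) :
    aOp (Int.negSucc m) (eD S) = koszulSign m S • eD (S.erase m) := by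
  simp [aOp_eD, aVec, h, koszulSign_eq_neg_one_pow, Int.neg_negSucc]

theorem aOp_negSucc_eD_insert {m : ℕ} {S : Finset ℕ} (h : m ∉ S) :
    aOp (Int.negSucc m) (eD (insert m S)) = koszulSign m S • eD S := by
  rw [aOp_negSucc_eD_of_mem (S.mem_insert_self m), koszulSign_insert_self, Finset.erase_insert h]

theorem aOp_natCast_anticomm (i j : ℕ) (x : FockD) : aOp i (aOp j x) = -aOp j (aOp i x) := by
  wlog hij : i ≤ j generalizing i j
  · rw [this j i (le_of_not_ge hij), neg_neg]
  suffices aOp i ∘ₗ aOp j = -(aOp j ∘ₗ aOp i) from LinearMap.congr_fun this x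
  refine FockD.hom_ext fun S => ?_
  rcases hij.eq_or_lt with rfl | hij
  · by_cases hi : i ∈ S <;> simp [aOp_natCast_eD_of_mem, aOp_natCast_eD_of_notMem, hi]
  -- Only the mode `i < j` has to pass `j`, and it does so in only one of the two orders.
  by_cases hi : i ∈ S <;> by_cases hj : j ∈ S
  all_goals simp [aOp_natCast_eD_of_mem, aOp_natCast_eD_of_notMem, koszulSign_insert, hi, hj,
    hij, hij.ne, hij.ne', hij.not_gt, Finset.insert_comm i j, smul_smul, mul_comm]

theorem aOp_negSucc_anticomm (i j : ℕ) (x : FockD) :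
    aOp (Int.negSucc i) (aOp (Int.negSucc j) x) = -aOp (Int.negSucc j) (aOp (Int.negSucc i) x) := by
  wlog hij : i ≤ j generalizing i j
  · rw [this j i (le_of_not_ge hij), neg_neg]
  suffices aOp (Int.negSucc i) ∘ₗ aOp (Int.negSucc j) =
      -(aOp (Int.negSucc j) ∘ₗ aOp (Int.negSucc i)) from LinearMap.congr_fun this x
  refine FockD.hom_ext fun S => ?_
  rcases hij.eq_or_lt with rfl | hij
  · by_cases hi : i ∈ S <;> simp [aOp_negSucc_eD_of_mem, aOp_negSucc_eD_of_notMem, hi]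
  by_cases hi : i ∈ S <;> by_cases hj : j ∈ S
  all_goals simp [aOp_negSucc_eD_of_mem, aOp_negSucc_eD_of_notMem, koszulSign_erase, hi, hj,
    hij, hij.ne, hij.ne', hij.not_gt, Finset.erase_right_comm (a := i), smul_smul, mul_comm]

theorem NO_apply (i j : ℤ) (x : FockD) :
    NO i j x = if 0 ≤ i then aOp i (aOp j x) else -aOp j (aOp i x) := by
  unfold NO
  split_ifs <;> rfl

theorem NO_antisymm (i j : ℤ) (x : FockD) : NO i j x = -NO j i x := by
  rcases i with i | i <;> rcases j with j | j <;> simp only [NO_apply]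
  · simpa using aOp_natCast_anticomm i j x
  · simp
  · simp
  · simpa [neg_eq_iff_eq_neg] using aOp_negSucc_anticomm j i x

theorem eventually_atBot_aOp_eq_zero (x : FockD) : ∀ᶠ m in Filter.atBot, aOp m x = 0 := by
  induction x using Finsupp.induction_linear with
  | zero => simp
  | add x y hx hy =>
    filter_upwards [hx, hy] with m hmx hmy
    rw [map_add, hmx, hmy, add_zero]
  | single S c =>
    obtain ⟨N, hN⟩ := S.exists_nat_subset_range
    filter_upwards [Filter.eventually_lt_atBot (-N : ℤ)] with m hm
    obtain ⟨t, rfl⟩ := Int.eq_negSucc_of_lt_zero (by lia : m < 0)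
    have ht : t ∉ S := fun h => by have := Finset.mem_range.mp (hN h); lia
    rw [← mul_one c, ← smul_eq_mul, ← Finsupp.smul_single, map_smul]
    exact (congrArg (c • ·) (aOp_negSucc_eD_of_notMem ht)).trans (smul_zero c)

theorem hasFiniteSupport_NO (c : ℤ) (x : FockD) :
    Function.HasFiniteSupport fun i => NO i (c - i) x := by
  obtain ⟨N, hN⟩ := Filter.eventually_atBot.mp (eventually_atBot_aOp_eq_zero x)
  refine (Set.finite_Icc (min N 0) (max 0 (c - N))).subset fun i hi => ?_
  by_contra hi'
  refine hi ?_
  rw [Set.mem_Icc] at hi'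
  dsimp only
  rw [NO_apply]
  split_ifs with h
  · rw [hN (c - i) (by lia), map_zero]
  · rw [hN i (by lia), map_zero, neg_zero]

end NeutralModes

section Interleaving

/-- The bijection `(A, B) ↦ {2a + 1 : a ∈ A} ∪ {2b : b ∈ B}` between the basis labels of the two
Fock spaces. -/
def interleave : Finset ℕ × Finset ℕ ≃ Finset ℕ :=
  (Equiv.prodComm _ _).trans
    (Finset.sumEquiv.symm.toEquiv.trans Equiv.natSumNatEquivNat.finsetCongr)

theorem interleave_apply (A B : Finset ℕ) :
    interleave (A, B) = (B.disjSum A).map Equiv.natSumNatEquivNat.toEmbedding :=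
  rfl

theorem odd_mem_interleave {A B : Finset ℕ} {a : ℕ} : 2 * a + 1 ∈ interleave (A, B) ↔ a ∈ A := by
  rw [interleave_apply, Finset.mem_map_equiv,
    (Equiv.symm_apply_eq _).mpr (by simp : 2 * a + 1 = Equiv.natSumNatEquivNat (.inr a)),
    Finset.inr_mem_disjSum]

theorem even_mem_interleave {A B : Finset ℕ} {b : ℕ} : 2 * b ∈ interleave (A, B) ↔ b ∈ B := by
  rw [interleave_apply, Finset.mem_map_equiv,
    (Equiv.symm_apply_eq _).mpr (by simp : 2 * b = Equiv.natSumNatEquivNat (.inl b)),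
    Finset.inl_mem_disjSum]

theorem interleave_insert_left (a : ℕ) (A B : Finset ℕ) :
    interleave (insert a A, B) = insert (2 * a + 1) (interleave (A, B)) := by
  ext s
  obtain ⟨k, rfl | rfl⟩ := s.even_or_odd'
  · have : 2 * k ≠ 2 * a + 1 := by lia
    simp [even_mem_interleave, this]
  · simp [odd_mem_interleave]

theorem interleave_insert_right (b : ℕ) (A B : Finset ℕ) :
    interleave (A, insert b B) = insert (2 * b) (interleave (A, B)) := by
  ext s
  obtain ⟨k, rfl | rfl⟩ := s.even_or_odd'
  · simp [even_mem_interleave]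
  · have : 2 * k + 1 ≠ 2 * b := by lia
    simp [odd_mem_interleave, this]

theorem prod_interleave {M : Type*} [CommMonoid M] (A B : Finset ℕ) (f : ℕ → M) :
    ∏ s ∈ interleave (A, B), f s = (∏ a ∈ A, f (2 * a + 1)) * ∏ b ∈ B, f (2 * b) := by
  simp [interleave_apply, Finset.prod_map, Finset.prod_disjSum, mul_comm]

theorem koszulSign_odd_interleave (a : ℕ) (A B : Finset ℕ) :
    koszulSign (2 * a + 1) (interleave (A, B)) = koszulSign a A * koszulSign a B := by
  have odd_lt_even (b : ℕ) : 2 * a + 1 < 2 * b ↔ a < b := by lia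
  simp [koszulSign, prod_interleave, odd_lt_even]

theorem koszulSign_even_interleave (b : ℕ) (A B : Finset ℕ) :
    koszulSign (2 * b) (interleave (A, B)) =
      (-1) ^ A.card * (∏ a ∈ A, if a < b then -1 else 1) * koszulSign b B := by
  have even_lt_odd (a : ℕ) : (if 2 * b < 2 * a + 1 then -1 else 1 : ℂ) =
      -1 * if a < b then -1 else 1 := by
    split_ifs <;> first | lia | norm_num
  simp only [koszulSign, prod_interleave, even_lt_odd, Finset.prod_mul_distrib,
    Finset.prod_const, Nat.mul_lt_mul_left two_pos]

end Interleaving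

section ChargedModes

theorem psiP_eA (m : ℤ) (A B : Finset ℕ) : psiP m (eA A B) = psiPVec m (A, B) := by
  simp [psiP, eA]

theorem psiM_eA (m : ℤ) (A B : Finset ℕ) : psiM m (eA A B) = psiMVec m (A, B) := by
  simp [psiM, eA]

theorem psiP_negSucc_eA_of_mem {a : ℕ} {A : Finset ℕ} (h : a ∈ A) (B : Finset ℕ) :
    psiP (Int.negSucc a) (eA A B) = 0 := by
  simp [psiP_eA, psiPVec, h, Int.neg_negSucc]

theorem psiP_negSucc_eA_of_notMem {a : ℕ} {A : Finset ℕ} (h : a ∉ A) (B : Finset ℕ) :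
    psiP (Int.negSucc a) (eA A B) = koszulSign a A • eA (insert a A) B := by
  simp [psiP_eA, psiPVec, h, koszulSign_eq_neg_one_pow, Int.neg_negSucc]

theorem psiP_natCast_eA_of_notMem (A : Finset ℕ) {b : ℕ} {B : Finset ℕ} (h : b ∉ B) :
    psiP b (eA A B) = 0 := by
  simp [psiP_eA, psiPVec, h]

theorem psiP_natCast_eA_insert (A : Finset ℕ) {b : ℕ} {B : Finset ℕ} (h : b ∉ B) :
    psiP b (eA A (insert b B)) = ((-1) ^ A.card * koszulSign b B) • eA A B := by
  rw [← koszulSign_insert_self]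
  simp [psiP_eA, psiPVec, h, koszulSign_eq_neg_one_pow, pow_add]

theorem psiM_negSucc_eA_of_mem (A : Finset ℕ) {b : ℕ} {B : Finset ℕ} (h : b ∈ B) :
    psiM (Int.negSucc b) (eA A B) = 0 := by
  simp [psiM_eA, psiMVec, h, Int.neg_negSucc]

theorem psiM_negSucc_eA_of_notMem (A : Finset ℕ) {b : ℕ} {B : Finset ℕ} (h : b ∉ B) :
    psiM (Int.negSucc b) (eA A B) = ((-1) ^ A.card * koszulSign b B) • eA A (insert b B) := by
  simp [psiM_eA, psiMVec, h, koszulSign_eq_neg_one_pow, Int.neg_negSucc, pow_add]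

theorem psiM_natCast_eA_of_notMem {a : ℕ} {A : Finset ℕ} (h : a ∉ A) (B : Finset ℕ) :
    psiM a (eA A B) = 0 := by
  simp [psiM_eA, psiMVec, h]

theorem psiM_natCast_eA_insert {a : ℕ} {A : Finset ℕ} (h : a ∉ A) (B : Finset ℕ) :
    psiM a (eA (insert a A) B) = koszulSign a A • eA A B := by
  rw [← koszulSign_insert_self]
  simp [psiM_eA, psiMVec, h, koszulSign_eq_neg_one_pow]

/-- The charged normal ordered product `:ψ⁺_j ψ⁻_k:`, applied to a vector. -/
def chargedNO (j k : ℤ) (x : FockA) : FockA :=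
  if j ≤ -1 then psiP j (psiM k x) else -psiM k (psiP j x)

theorem hA_eq_finsum_chargedNO (n : ℤ) (x : FockA) :
    hA n x = ∑ᶠ j, chargedNO j (n - j - 1) x :=
  rfl

end ChargedModes

section Intertwining

/-- The basis of the charged Fock space given by `e_{(A, B)}` up to the sign
`crossingSign A B`. -/
def signedBasisA : Module.Basis (Finset ℕ × Finset ℕ) ℂ FockA :=
  Finsupp.basisSingleOne.isUnitSMul fun p =>
    IsUnit.of_mul_eq_one _ (crossingSign_mul_self p.1 p.2)

theorem signedBasisA_apply (A B : Finset ℕ) :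
    signedBasisA (A, B) = crossingSign A B • eA A B := by
  rw [signedBasisA, Module.Basis.isUnitSMul_apply, Finsupp.coe_basisSingleOne, eA]

/-- The isomorphism of Fock spaces that sorts the neutral modes by parity, the odd ones in front
of the even ones. -/
def fockEquiv : FockD ≃ₗ[ℂ] FockA :=
  basisD.equiv signedBasisA interleave.symm

theorem fockEquiv_eD_interleave (A B : Finset ℕ) :
    fockEquiv (eD (interleave (A, B))) = crossingSign A B • eA A B := by
  rw [fockEquiv, ← basisD_apply, Module.Basis.equiv_apply, Equiv.symm_apply_apply,
    signedBasisA_apply]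

theorem FockD.hom_ext_interleave_left {M : Type*} [AddCommMonoid M] [Module ℂ M]
    {f g : FockD →ₗ[ℂ] M} (a : ℕ)
    (h : ∀ A B, a ∉ A → f (eD (interleave (A, B))) = g (eD (interleave (A, B))))
    (h_insert : ∀ A B, a ∉ A →
      f (eD (interleave (insert a A, B))) = g (eD (interleave (insert a A, B)))) : f = g := by
  refine FockD.hom_ext fun S => ?_
  obtain ⟨⟨A, B⟩, rfl⟩ := interleave.surjective S
  by_cases ha : a ∈ A
  · rw [← Finset.insert_erase ha]
    exact h_insert _ B (A.notMem_erase a)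
  · exact h A B ha

theorem FockD.hom_ext_interleave_right {M : Type*} [AddCommMonoid M] [Module ℂ M]
    {f g : FockD →ₗ[ℂ] M} (b : ℕ)
    (h : ∀ A B, b ∉ B → f (eD (interleave (A, B))) = g (eD (interleave (A, B))))
    (h_insert : ∀ A B, b ∉ B →
      f (eD (interleave (A, insert b B))) = g (eD (interleave (A, insert b B)))) : f = g := by
  refine FockD.hom_ext fun S => ?_
  obtain ⟨⟨A, B⟩, rfl⟩ := interleave.surjective S
  by_cases hb : b ∈ B
  · rw [← Finset.insert_erase hb]
    exact h_insert A _ (B.notMem_erase b)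
  · exact h A B hb

theorem fockEquiv_aOp_natCast_odd (a : ℕ) (x : FockD) :
    fockEquiv (aOp (2 * a + 1 : ℕ) x) = psiP (Int.negSucc a) (fockEquiv x) := by
  suffices fockEquiv.toLinearMap ∘ₗ aOp (2 * a + 1 : ℕ) =
      psiP (Int.negSucc a) ∘ₗ fockEquiv.toLinearMap from LinearMap.congr_fun this x
  refine FockD.hom_ext_interleave_left a (fun A B ha => ?_) fun A B _ => ?_ <;>
    simp only [LinearMap.comp_apply, LinearEquiv.coe_coe, fockEquiv_eD_interleave, map_smul]
  · rw [aOp_natCast_eD_of_notMem (odd_mem_interleave.not.mpr ha), psiP_negSucc_eA_of_notMem ha,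
      ← interleave_insert_left, map_smul, fockEquiv_eD_interleave, smul_smul, smul_smul,
      koszulSign_odd_interleave, crossingSign_insert_left ha]
    congr 1
    linear_combination koszulSign a A * crossingSign A B * koszulSign_mul_self a B
  · rw [aOp_natCast_eD_of_mem (odd_mem_interleave.mpr (Finset.mem_insert_self a A)), map_zero,
      psiP_negSucc_eA_of_mem (Finset.mem_insert_self a A), smul_zero]

theorem fockEquiv_aOp_negSucc_odd (a : ℕ) (x : FockD) :
    fockEquiv (aOp (Int.negSucc (2 * a + 1)) x) = psiM a (fockEquiv x) := by
  suffices fockEquiv.toLinearMap ∘ₗ aOp (Int.negSucc (2 * a + 1)) =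
      psiM a ∘ₗ fockEquiv.toLinearMap from LinearMap.congr_fun this x
  refine FockD.hom_ext_interleave_left a (fun A B ha => ?_) fun A B ha => ?_ <;>
    simp only [LinearMap.comp_apply, LinearEquiv.coe_coe, fockEquiv_eD_interleave, map_smul]
  · rw [aOp_negSucc_eD_of_notMem (odd_mem_interleave.not.mpr ha), psiM_natCast_eA_of_notMem ha,
      map_zero, smul_zero]
  · rw [interleave_insert_left, aOp_negSucc_eD_insert (odd_mem_interleave.not.mpr ha),
      psiM_natCast_eA_insert ha, map_smul, fockEquiv_eD_interleave, smul_smul, smul_smul,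
      koszulSign_odd_interleave, crossingSign_insert_left ha]
    congr 1
    ring

theorem fockEquiv_aOp_natCast_even (b : ℕ) (x : FockD) :
    fockEquiv (aOp (2 * b : ℕ) x) = psiM (Int.negSucc b) (fockEquiv x) := by
  suffices fockEquiv.toLinearMap ∘ₗ aOp (2 * b : ℕ) =
      psiM (Int.negSucc b) ∘ₗ fockEquiv.toLinearMap from LinearMap.congr_fun this x
  refine FockD.hom_ext_interleave_right b (fun A B hb => ?_) fun A B _ => ?_ <;>
    simp only [LinearMap.comp_apply, LinearEquiv.coe_coe, fockEquiv_eD_interleave, map_smul]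
  · rw [aOp_natCast_eD_of_notMem (even_mem_interleave.not.mpr hb), psiM_negSucc_eA_of_notMem A hb,
      ← interleave_insert_right, map_smul, fockEquiv_eD_interleave, smul_smul, smul_smul,
      koszulSign_even_interleave, crossingSign_insert_right hb]
    congr 1
    linear_combination (-1) ^ A.card * koszulSign b B * crossingSign A B *
      prod_ite_neg_one_mul_self (· < b) A
  · rw [aOp_natCast_eD_of_mem (even_mem_interleave.mpr (Finset.mem_insert_self b B)), map_zero,
      psiM_negSucc_eA_of_mem A (Finset.mem_insert_self b B), smul_zero]

theorem fockEquiv_aOp_negSucc_even (b : ℕ) (x : FockD) :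
    fockEquiv (aOp (Int.negSucc (2 * b)) x) = psiP b (fockEquiv x) := by
  suffices fockEquiv.toLinearMap ∘ₗ aOp (Int.negSucc (2 * b)) =
      psiP b ∘ₗ fockEquiv.toLinearMap from LinearMap.congr_fun this x
  refine FockD.hom_ext_interleave_right b (fun A B hb => ?_) fun A B hb => ?_ <;>
    simp only [LinearMap.comp_apply, LinearEquiv.coe_coe, fockEquiv_eD_interleave, map_smul]
  · rw [aOp_negSucc_eD_of_notMem (even_mem_interleave.not.mpr hb), psiP_natCast_eA_of_notMem A hb,
      map_zero, smul_zero]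
  · rw [interleave_insert_right, aOp_negSucc_eD_insert (even_mem_interleave.not.mpr hb),
      psiP_natCast_eA_insert A hb, map_smul, fockEquiv_eD_interleave, smul_smul, smul_smul,
      koszulSign_even_interleave, crossingSign_insert_right hb]
    congr 1
    ring

theorem fockEquiv_aOp_odd (k : ℤ) (x : FockD) :
    fockEquiv (aOp (2 * k + 1) x) = psiP (-1 - k) (fockEquiv x) := by
  rcases k with a | b
  · convert fockEquiv_aOp_natCast_odd a x using 3 <;> lia
  · convert fockEquiv_aOp_negSucc_even b x using 3 <;> lia

theorem fockEquiv_aOp_even (k : ℤ) (x : FockD) :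
    fockEquiv (aOp (2 * k) x) = psiM (-1 - k) (fockEquiv x) := by
  rcases k with b | a
  · convert fockEquiv_aOp_natCast_even b x using 3 <;> lia
  · convert fockEquiv_aOp_negSucc_odd a x using 3 <;> lia

theorem fockEquiv_NO_odd_even (k l : ℤ) (x : FockD) :
    fockEquiv (NO (2 * k + 1) (2 * l) x) = chargedNO (-1 - k) (-1 - l) (fockEquiv x) := by
  have creation_iff : 0 ≤ 2 * k + 1 ↔ -1 - k ≤ -1 := by lia
  rw [NO_apply, apply_ite fockEquiv, map_neg]
  simp only [fockEquiv_aOp_odd, fockEquiv_aOp_even, creation_iff, chargedNO]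

end Intertwining

/-- The odd and the even indices contribute equally, exchanged by `i ↦ -2n - 1 - i`. -/
theorem hD_eq_finsum_NO_odd_even (n : ℤ) (x : FockD) :
    hD n x = ∑ᶠ k : ℤ, NO (2 * k + 1) (2 * (-n - 1 - k)) x := by
  have finite_support : Function.HasFiniteSupport fun i : ℤ =>
      (-1 : ℂ) ^ (i + 1) • NO i (-2 * n - 1 - i) x :=
    (hasFiniteSupport_NO (-2 * n - 1) x).subset
      (Function.support_smul_subset_right (fun i : ℤ => (-1 : ℂ) ^ (i + 1)) _)
  have odd_term (k : ℤ) : (-1 : ℂ) ^ (2 * k + 1 + 1) • NO (2 * k + 1) (-2 * n - 1 - (2 * k + 1)) x =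
      NO (2 * k + 1) (2 * (-n - 1 - k)) x := by
    rw [Even.neg_one_zpow ⟨k + 1, by ring⟩, one_smul]
    ring_nf
  have even_term (k : ℤ) : (-1 : ℂ) ^ (2 * k + 1) • NO (2 * k) (-2 * n - 1 - 2 * k) x =
      NO (2 * (-n - 1 - k) + 1) (2 * k) x := by
    rw [Odd.neg_one_zpow ⟨k, rfl⟩, neg_one_smul, NO_antisymm, neg_neg]
    ring_nf
  have even_sum : ∑ᶠ k : ℤ, NO (2 * (-n - 1 - k) + 1) (2 * k) x =
      ∑ᶠ k : ℤ, NO (2 * k + 1) (2 * (-n - 1 - k)) x := by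
    rw [← finsum_comp_equiv (Equiv.subLeft (-n - 1))]
    simp
  rw [hD, finsum_int_even_add_odd finite_support]
  simp only [odd_term, even_term]
  rw [even_sum, ← two_smul ℂ, smul_smul]
  norm_num

/-- As modules for the Heisenberg algebra `H_ℤ`, the neutral fermion Fock space `F^{⊗1/2}`
is isomorphic to the charged free fermion Fock space `F^{⊗1}`: there is a ℂ-linear
bijection `U : F → F^{⊗1}` with `U(h_n x) = h^A_n(U x)` for all `n ∈ ℤ`, `x ∈ F`. -/
theorem heisenberg_module_isomorphism :
    ∃ U : FockD ≃ₗ[ℂ] FockA, ∀ (n : ℤ) (x : FockD), U (hD n x) = hA n (U x) := by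
  refine ⟨fockEquiv, fun n x => ?_⟩
  have mode_index (k : ℤ) : -1 - (-n - 1 - k) = n - (-1 - k) - 1 := by ring
  calc
    fockEquiv (hD n x) = fockEquiv (∑ᶠ k, NO (2 * k + 1) (2 * (-n - 1 - k)) x) := by
      rw [hD_eq_finsum_NO_odd_even]
    _ = ∑ᶠ k, fockEquiv (NO (2 * k + 1) (2 * (-n - 1 - k)) x) :=
      fockEquiv.toAddEquiv.map_finsum _
    _ = ∑ᶠ k, chargedNO (-1 - k) (n - (-1 - k) - 1) (fockEquiv x) := by
      simp only [fockEquiv_NO_odd_even, mode_index]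
    _ = ∑ᶠ j, chargedNO j (n - j - 1) (fockEquiv x) :=
      finsum_comp_equiv (Equiv.subLeft (-1))
        (f := fun j => chargedNO j (n - j - 1) (fockEquiv x))
    _ = hA n (fockEquiv x) := (hA_eq_finsum_chargedNO n _).symm
end
end

section
/- Let q, z be complex numbers with 0 < |q| < 1 and z ≠ 0. Then the family (z^{c(S)} q^{w(S)})_{S finite ⊆ ℕ} is absolutely summable and ∑_{S finite ⊆ ℕ} z^{c(S)} q^{w(S)} = ∏_{i=0}^{∞} (1 + z q^{4i+3})(1 + z^{−1} q^{4i+1}). (This is the fermionic graded dimension formula ch F = tr_F q^{L_0} z^{h_0} = ∏_{i≥1}(1 + z q^{2i−1/2})(1 + z^{−1} q^{2i−3/2}) of the paper, with q replaced by q² to avoid half-integer exponents.) -/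
noncomputable section

/-- Weight `w(S) = ∑_{s∈S} (2s+1)` of a finite set `S ⊆ ℕ`. -/
def wgt (S : Finset ℕ) : ℕ := ∑ s ∈ S, (2 * s + 1)

/-!
The monomial `z ^ c(S) * q ^ w(S)` is multiplicative over the elements of `S`: each `s` contributes
`z * q ^ (2 * s + 1)` if it is odd and `z⁻¹ * q ^ (2 * s + 1)` if it is even. These factors are
dominated by a geometric sequence, so `∑_S ∏_{s ∈ S} f s = ∏_s (1 + f s)` applies with absolute
convergence, and the product over `s` is regrouped into the pairs `{2 * i, 2 * i + 1}`.
-/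

lemma hasProd_even_mul_odd {M : Type*} [CommMonoid M] [TopologicalSpace M] [ContinuousMul M]
    [RegularSpace M] {f : ℕ → M} {m : M} (hf : HasProd f m) :
    HasProd (fun k => f (2 * k) * f (2 * k + 1)) m := by
  have h_pairs : HasProd (f ∘ (Nat.divModEquiv 2).symm) m :=
    (Nat.divModEquiv 2).symm.hasProd_iff.2 hf
  simpa [mul_comm] using h_pairs.prod_fiberwise fun k => hasProd_fintype _

section Field

variable {K : Type*} [Field K]

/-- The factor by which an occupied mode `s` multiplies the monomial `z ^ chg S * q ^ wgt S`: odd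
modes have charge `1`, even modes have charge `-1`, and the weight of `s` is `2 * s + 1`. -/
def modeTerm (q z : K) (s : ℕ) : K :=
  (if Odd s then z else z⁻¹) * q ^ (2 * s + 1)

lemma modeTerm_two_mul (q z : K) (i : ℕ) :
    modeTerm q z (2 * i) = z⁻¹ * q ^ (4 * i + 1) := by
  rw [modeTerm, if_neg (by simp)]
  ring

lemma modeTerm_two_mul_add_one (q z : K) (i : ℕ) :
    modeTerm q z (2 * i + 1) = z * q ^ (4 * i + 3) := by
  rw [modeTerm, if_pos (odd_two_mul_add_one i)]
  ring

lemma prod_modeTerm (q : K) {z : K} (hz : z ≠ 0) (S : Finset ℕ) :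
    ∏ s ∈ S, modeTerm q z s = z ^ chg S * q ^ wgt S := by
  have h_charge : ∏ s ∈ S, (if Odd s then z else z⁻¹) = z ^ chg S := by
    simp only [Finset.prod_ite, Finset.prod_const, chg, zpow_sub₀ hz, zpow_natCast, inv_pow,
      div_eq_mul_inv, Nat.not_odd_iff_even]
  simp only [modeTerm, Finset.prod_mul_distrib, h_charge, Finset.prod_pow_eq_pow_sum, wgt]

end Field

section NormedField

variable {K : Type*} [NormedField K] {q : K}

lemma norm_modeTerm_le (hq : ‖q‖ ≤ 1) (z : K) (s : ℕ) :
    ‖modeTerm q z s‖ ≤ max ‖z‖ ‖z⁻¹‖ * ‖q‖ ^ s := by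
  have h_charge : ‖if Odd s then z else z⁻¹‖ ≤ max ‖z‖ ‖z⁻¹‖ := by
    split_ifs
    exacts [le_max_left _ _, le_max_right _ _]
  have h_weight : ‖q‖ ^ (2 * s + 1) ≤ ‖q‖ ^ s :=
    pow_le_pow_of_le_one (norm_nonneg q) hq (by lia)
  rw [modeTerm, norm_mul, norm_pow]
  gcongr

lemma summable_norm_modeTerm (hq : ‖q‖ < 1) (z : K) : Summable fun s => ‖modeTerm q z s‖ :=
  ((summable_geometric_of_lt_one (norm_nonneg q) hq).mul_left _).of_nonneg_of_le
    (fun _ => norm_nonneg _) (norm_modeTerm_le hq.le z)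

end NormedField

theorem fermionic_graded_dimension_general {K : Type*} [NormedField K] [CompleteSpace K]
    (q z : K) (hq : ‖q‖ < 1) (hz : z ≠ 0) :
    Summable (fun S : Finset ℕ => ‖z ^ chg S * q ^ wgt S‖) ∧
    HasProd (fun i : ℕ => (1 + z * q ^ (4 * i + 3)) * (1 + z⁻¹ * q ^ (4 * i + 1)))
      (∑' S : Finset ℕ, z ^ chg S * q ^ wgt S) := by
  have h_modes := summable_norm_modeTerm hq z
  simp only [← prod_modeTerm q hz, norm_prod]
  refine ⟨summable_finsetProd_of_summable_nonneg (fun _ => norm_nonneg _) h_modes, ?_⟩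
  have h_prod : HasProd (fun s => 1 + modeTerm q z s) (∑' S : Finset ℕ, ∏ s ∈ S, modeTerm q z s) :=
    hasProd_one_add_of_hasSum_prod (summable_finsetProd_of_summable_norm h_modes).hasSum
  simpa only [modeTerm_two_mul, modeTerm_two_mul_add_one, mul_comm (1 + z⁻¹ * _)]
    using hasProd_even_mul_odd h_prod

/-- Fermionic graded dimension formula for `F^{⊗1/2}` (with `q` replaced by `q²`):
`∑_{S finite ⊆ ℕ} z^{c(S)} q^{w(S)} = ∏_{i=0}^∞ (1 + z q^{4i+3})(1 + z⁻¹ q^{4i+1})`,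
the family on the left being absolutely summable. -/
theorem fermionic_graded_dimension (q z : ℂ) (hq0 : 0 < ‖q‖) (hq1 : ‖q‖ < 1) (hz : z ≠ 0) :
    Summable (fun S : Finset ℕ => ‖z ^ chg S * q ^ wgt S‖) ∧
    ∑' S : Finset ℕ, z ^ chg S * q ^ wgt S
      = ∏' i : ℕ, (1 + z * q ^ (4 * i + 3)) * (1 + z⁻¹ * q ^ (4 * i + 1)) := by
  obtain ⟨h_summable, h_prod⟩ := fermionic_graded_dimension_general q z hq1 hz
  exact ⟨h_summable, h_prod.tprod_eq.symm⟩
end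
end

section
/- Let q, z be complex numbers with 0 < |q| < 1 and z ≠ 0. Then (∑_{S finite ⊆ ℕ} z^{c(S)} q^{w(S)}) · ∏_{i=0}^{∞} (1 − q^{4i+4}) = ∑_{n∈ℤ} z^n q^{2n²+n}, where the sum over finite subsets and the sum over ℤ are absolutely convergent and the infinite product converges. (This is the bosonic graded dimension formula ch F = (∏_{i≥1}(1−q^{2i}))^{−1} ∑_{n∈ℤ} z^n q^{n/2} q^{n²} of the paper, with q replaced by q².) -/
noncomputable section

/-!
Every subset `S` contributes a product over its elements, so the sum over finite subsets expands
`∏ (1 + z q^(4i+3)) (1 + z⁻¹ q^(4i+1))`, and the claim is the Jacobi triple product identity for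
the nome `q²` and the variable `z q`. The latter is the limit `m → ∞` of the `q`-binomial theorem
for `∏_{i < 2m} (1 + z q^(1-2m) q^(2i))`: after removing the monomial `z^m q^(-m²)`, the coefficient
of `z^n` is `q^(n²)` times a Gaussian binomial coefficient that converges, boundedly in `m` and `n`,
to `∏ (1 - q^(2i+2))⁻¹`.
-/

open Filter Finset Topology

section GaussBinom

section Semiring

variable {R : Type*} [Semiring R] (q : R)

/-- The Gaussian binomial coefficient `[n choose k]_q`, defined by the `q`-Pascal recursion so that
it makes sense in every semiring, including where the quotient of `q`-factorials does not. -/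
def gaussBinom : ℕ → ℕ → R
  | _, 0 => 1
  | 0, _ + 1 => 0
  | n + 1, k + 1 => gaussBinom n k + q ^ (k + 1) * gaussBinom n (k + 1)

@[simp]
lemma gaussBinom_zero_right (n : ℕ) : gaussBinom q n 0 = 1 := by
  cases n <;> rfl

lemma gaussBinom_succ_succ (n k : ℕ) :
    gaussBinom q (n + 1) (k + 1) = gaussBinom q n k + q ^ (k + 1) * gaussBinom q n (k + 1) :=
  rfl

lemma gaussBinom_eq_zero_of_lt {n k : ℕ} (h : n < k) :
    gaussBinom q n k = 0 := by
  obtain ⟨k, rfl⟩ := Nat.exists_eq_add_one_of_ne_zero (Nat.ne_zero_of_lt h)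
  induction n generalizing k with
  | zero => rfl
  | succ n ih =>
    obtain ⟨k, rfl⟩ := Nat.exists_eq_add_one_of_ne_zero (by omega : k ≠ 0)
    rw [gaussBinom_succ_succ, ih k (by omega), ih (k + 1) (by omega), mul_zero, add_zero]

@[simp]
lemma gaussBinom_self (n : ℕ) : gaussBinom q n n = 1 := by
  induction n with
  | zero => rfl
  | succ n ih => rw [gaussBinom_succ_succ, ih, gaussBinom_eq_zero_of_lt q n.lt_succ_self]; simp

end Semiring

theorem prod_one_add_mul_pow_eq_sum_gaussBinom {R : Type*} [CommSemiring R] (q y : R) (n : ℕ) :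
    ∏ i ∈ range n, (1 + y * q ^ i) =
      ∑ k ∈ range (n + 1), q ^ k.choose 2 * gaussBinom q n k * y ^ k := by
  induction n generalizing y with
  | zero => simp
  | succ n ih =>
    have hshift : ∏ i ∈ range n, (1 + y * q ^ (i + 1)) =
        ∑ k ∈ range (n + 1), q ^ k.choose 2 * gaussBinom q n k * (y * q) ^ k := by
      rw [← ih (y * q)]
      exact prod_congr rfl fun i _ ↦ by ring
    have hpad : ∑ k ∈ range (n + 1), q ^ k.choose 2 * gaussBinom q n k * (y * q) ^ k =
        ∑ k ∈ range (n + 2), q ^ k.choose 2 * gaussBinom q n k * (y * q) ^ k := by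
      rw [sum_range_succ _ (n + 1), gaussBinom_eq_zero_of_lt q n.lt_succ_self]
      simp
    calc ∏ i ∈ range (n + 1), (1 + y * q ^ i)
        = (∑ k ∈ range (n + 2), q ^ k.choose 2 * gaussBinom q n k * (y * q) ^ k) +
            ∑ k ∈ range (n + 1), q ^ k.choose 2 * gaussBinom q n k * (y * q) ^ k * y := by
          rw [prod_range_succ', hshift, pow_zero, mul_one, mul_add, mul_one, ← hpad, sum_mul]
      _ = ∑ k ∈ range (n + 2), q ^ k.choose 2 * gaussBinom q (n + 1) k * y ^ k := by
          rw [sum_range_succ' _ (n + 1), sum_range_succ' _ (n + 1), add_right_comm,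
            ← sum_add_distrib]
          congr 1
          · refine sum_congr rfl fun k _ ↦ ?_
            rw [gaussBinom_succ_succ, Nat.choose_succ_succ', Nat.choose_one_right]
            ring
          · simp

section CommRing

variable {R : Type*} [CommRing R] (q : R)

/-- The finite `q`-Pochhammer symbol `(q; q)_n`, the product of the `1 - q^i` for `1 ≤ i ≤ n`. -/
def qPochhammer (n : ℕ) : R := ∏ i ∈ range n, (1 - q ^ (i + 1))

lemma qPochhammer_succ (n : ℕ) :
    qPochhammer q (n + 1) = qPochhammer q n * (1 - q ^ (n + 1)) :=
  prod_range_succ _ _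

theorem gaussBinom_add_mul_qPochhammer : ∀ a b : ℕ,
    gaussBinom q (a + b) a * (qPochhammer q a * qPochhammer q b) = qPochhammer q (a + b)
  | 0, b => by simp [qPochhammer]
  | a + 1, 0 => by simp [qPochhammer]
  | a + 1, b + 1 => by
    have hleft := gaussBinom_add_mul_qPochhammer a (b + 1)
    have hright := gaussBinom_add_mul_qPochhammer (a + 1) b
    rw [← add_assoc] at hleft
    rw [add_right_comm] at hright
    rw [show a + 1 + (b + 1) = a + b + 1 + 1 by omega]
    rw [gaussBinom_succ_succ, qPochhammer_succ q (a + b + 1)]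
    rw [qPochhammer_succ q b] at hleft ⊢
    rw [qPochhammer_succ q a] at hright ⊢
    linear_combination (1 - q ^ (a + 1)) * hleft + q ^ (a + 1) * (1 - q ^ (b + 1)) * hright

end CommRing

end GaussBinom

section FiniteTripleProduct

variable {K : Type*} [Field K] {q z : K}

lemma prod_one_add_mul_zpow_mul_sq_pow (hq : q ≠ 0) (hz : z ≠ 0) (m : ℕ) :
    ∏ i ∈ range m, (1 + z * q ^ (1 - 2 * m : ℤ) * (q ^ 2) ^ i) =
      z ^ m * (q ^ m ^ 2)⁻¹ * ∏ i ∈ range m, (1 + z⁻¹ * q ^ (2 * i + 1)) := by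
  induction m with
  | zero => simp
  | succ m ih =>
    have hshift (i : ℕ) : z * q ^ (1 - 2 * (m + 1 : ℕ) : ℤ) * (q ^ 2) ^ (i + 1) =
        z * q ^ (1 - 2 * m : ℤ) * (q ^ 2) ^ i := by
      have : q ^ (1 - 2 * m : ℤ) = q ^ (1 - 2 * (m + 1 : ℕ) : ℤ) * q ^ 2 := by
        rw [← zpow_natCast q 2, ← zpow_add₀ hq]
        congr 1; push_cast; ring
      rw [this]; ring
    have hfirst : 1 + z * q ^ (1 - 2 * (m + 1 : ℕ) : ℤ) * (q ^ 2) ^ 0 =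
        z * (q ^ (2 * m + 1))⁻¹ * (1 + z⁻¹ * q ^ (2 * m + 1)) := by
      rw [show (1 - 2 * (m + 1 : ℕ) : ℤ) = -(2 * m + 1 : ℕ) by push_cast; ring, zpow_neg,
        zpow_natCast]
      field_simp
      ring
    rw [prod_range_succ', hfirst, prod_congr rfl fun i _ ↦ congrArg (1 + ·) (hshift i), ih,
      prod_range_succ, show (m + 1) ^ 2 = m ^ 2 + (2 * m + 1) by ring,
      pow_add q (m ^ 2), mul_inv, pow_succ z]
    ac_rfl

lemma two_mul_cast_choose_two (k : ℕ) : (2 * k.choose 2 : ℤ) = k * (k - 1) := by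
  qify
  rw [Nat.cast_choose_two]
  ring

theorem jacobi_triple_product_finite (hq : q ≠ 0) (hz : z ≠ 0) (m : ℕ) :
    ∏ i ∈ range m, ((1 + z * q ^ (2 * i + 1)) * (1 + z⁻¹ * q ^ (2 * i + 1))) =
      ∑ n ∈ Icc (-m : ℤ) m, z ^ n * q ^ n ^ 2 * gaussBinom (q ^ 2) (2 * m) (m + n).toNat := by
  set y := z * q ^ (1 - 2 * m : ℤ) with hy
  have hupper (i : ℕ) : y * (q ^ 2) ^ (m + i) = z * q ^ (2 * i + 1) := by
    rw [hy, ← pow_mul, mul_assoc, ← zpow_natCast, ← zpow_natCast, ← zpow_add₀ hq]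
    congr 2; push_cast; ring
  have hterm (k : ℕ) : z ^ (k - m : ℤ) * q ^ (k - m : ℤ) ^ 2 =
      (z ^ m)⁻¹ * q ^ m ^ 2 * ((q ^ 2) ^ k.choose 2 * y ^ k) := by
    have hexp : ((k : ℤ) - m) ^ 2 = m ^ 2 + 2 * k.choose 2 + (1 - 2 * m) * k := by
      linear_combination -two_mul_cast_choose_two k
    rw [hexp, hy, mul_pow, zpow_sub₀ hz, zpow_add₀ hq, zpow_add₀ hq, zpow_mul q (1 - 2 * m),
      zpow_mul q 2]
    norm_cast
    ring
  calc ∏ i ∈ range m, ((1 + z * q ^ (2 * i + 1)) * (1 + z⁻¹ * q ^ (2 * i + 1)))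
      = (z ^ m)⁻¹ * q ^ m ^ 2 * ∏ i ∈ range (2 * m), (1 + y * (q ^ 2) ^ i) := by
        rw [two_mul, prod_range_add, prod_one_add_mul_zpow_mul_sq_pow hq hz, prod_mul_distrib]
        simp only [hupper]
        field_simp
    _ = ∑ k ∈ range (2 * m + 1),
          z ^ (k - m : ℤ) * q ^ (k - m : ℤ) ^ 2 * gaussBinom (q ^ 2) (2 * m) k := by
        rw [prod_one_add_mul_pow_eq_sum_gaussBinom, mul_sum]
        refine sum_congr rfl fun k _ ↦ ?_
        rw [hterm]
        ring
    _ = ∑ n ∈ Icc (-m : ℤ) m, z ^ n * q ^ n ^ 2 * gaussBinom (q ^ 2) (2 * m) (m + n).toNat := by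
        refine sum_nbij' (fun k ↦ (k : ℤ) - m) (fun n ↦ (m + n).toNat) ?_ ?_ ?_ ?_ ?_
        all_goals simp only [mem_range, mem_Icc]
        all_goals grind

end FiniteTripleProduct

section Limits

variable {K : Type*} [NormedField K] {q : K}

lemma norm_pow_lt_one (hq : ‖q‖ < 1) {n : ℕ} (hn : n ≠ 0) : ‖q ^ n‖ < 1 := by
  rw [norm_pow]
  exact pow_lt_one₀ (norm_nonneg q) hq hn

lemma one_sub_pow_succ_ne_zero (hq : ‖q‖ < 1) (n : ℕ) : 1 - q ^ (n + 1) ≠ 0 := by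
  refine fun h ↦ (norm_pow_lt_one hq n.succ_ne_zero).ne ?_
  rw [← sub_eq_zero.mp h, norm_one]

lemma qPochhammer_ne_zero (hq : ‖q‖ < 1) (n : ℕ) : qPochhammer q n ≠ 0 :=
  prod_ne_zero_iff.mpr fun i _ ↦ one_sub_pow_succ_ne_zero hq i

lemma gaussBinom_add_eq_mul_inv (hq : ‖q‖ < 1) (a b : ℕ) : gaussBinom q (a + b) a =
    qPochhammer q (a + b) * ((qPochhammer q a)⁻¹ * (qPochhammer q b)⁻¹) := by
  rw [← mul_inv, eq_mul_inv_iff_mul_eq₀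
    (mul_ne_zero (qPochhammer_ne_zero hq a) (qPochhammer_ne_zero hq b)),
    gaussBinom_add_mul_qPochhammer]

lemma summable_norm_pow_succ (hq : ‖q‖ < 1) : Summable fun i : ℕ ↦ ‖q ^ (i + 1)‖ :=
  (summable_norm_geometric_of_norm_lt_one hq).comp_injective (add_left_injective 1)

lemma summable_norm_pow_mul_pow_sq (x : K) (hq : ‖q‖ < 1) :
    Summable fun n : ℕ ↦ ‖x ^ n * q ^ n ^ 2‖ := by
  have hlim : Tendsto (fun n : ℕ ↦ ‖x‖ * ‖q‖ ^ n) atTop (𝓝 0) := by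
    simpa using (tendsto_pow_atTop_nhds_zero_of_lt_one (norm_nonneg q) hq).const_mul ‖x‖
  refine summable_geometric_two.of_norm_bounded_eventually_nat ?_
  filter_upwards [hlim.eventually_le_const one_half_pos] with n hn
  calc ‖‖x ^ n * q ^ n ^ 2‖‖ = (‖x‖ * ‖q‖ ^ n) ^ n := by
        rw [norm_norm, norm_mul, norm_pow, norm_pow, sq, pow_mul, mul_pow]
    _ ≤ (1 / 2) ^ n := by gcongr

lemma summable_norm_zpow_mul_zpow_sq (z : K) (hq : ‖q‖ < 1) :
    Summable fun n : ℤ ↦ ‖z ^ n * q ^ n ^ 2‖ := by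
  refine .of_nat_of_neg ((summable_norm_pow_mul_pow_sq z hq).congr fun n ↦ ?_)
    ((summable_norm_pow_mul_pow_sq z⁻¹ hq).congr fun n ↦ ?_)
  · norm_cast
  · rw [neg_sq, zpow_neg, ← inv_zpow]
    norm_cast

variable [CompleteSpace K]

lemma multipliable_one_sub_pow_succ (hq : ‖q‖ < 1) :
    Multipliable fun i : ℕ ↦ 1 - q ^ (i + 1) := by
  simpa only [sub_eq_add_neg] using
    multipliable_one_add_of_summable (f := fun i : ℕ ↦ -q ^ (i + 1))
      (by simpa only [norm_neg] using summable_norm_pow_succ hq)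

lemma tprod_one_sub_pow_succ_ne_zero (hq : ‖q‖ < 1) : ∏' i : ℕ, (1 - q ^ (i + 1)) ≠ 0 := by
  simp only [sub_eq_add_neg]
  refine tprod_one_add_ne_zero_of_summable (fun i ↦ ?_)
    (by simpa only [norm_neg] using summable_norm_pow_succ hq)
  simpa only [sub_eq_add_neg] using one_sub_pow_succ_ne_zero hq i

lemma tendsto_qPochhammer (hq : ‖q‖ < 1) :
    Tendsto (qPochhammer q) atTop (𝓝 (∏' i : ℕ, (1 - q ^ (i + 1)))) :=
  (multipliable_one_sub_pow_succ hq).hasProd.tendsto_prod_nat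

lemma tendsto_inv_qPochhammer (hq : ‖q‖ < 1) :
    Tendsto (fun n ↦ (qPochhammer q n)⁻¹) atTop (𝓝 (∏' i : ℕ, (1 - q ^ (i + 1)))⁻¹) :=
  (tendsto_qPochhammer hq).inv₀ (tprod_one_sub_pow_succ_ne_zero hq)

lemma exists_norm_gaussBinom_le (hq : ‖q‖ < 1) : ∃ C, ∀ n k, ‖gaussBinom q n k‖ ≤ C := by
  obtain ⟨A, hA⟩ := (tendsto_qPochhammer hq).norm.bddAbove_range
  obtain ⟨B, hB⟩ := (tendsto_inv_qPochhammer hq).norm.bddAbove_range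
  rw [mem_upperBounds, Set.forall_mem_range] at hA hB
  have hA₀ : 0 ≤ A := (norm_nonneg _).trans (hA 0)
  have hB₀ : 0 ≤ B := (norm_nonneg _).trans (hB 0)
  refine ⟨A * (B * B), fun n k ↦ ?_⟩
  rcases lt_or_ge n k with h | h
  · rw [gaussBinom_eq_zero_of_lt q h, norm_zero]
    positivity
  · obtain ⟨b, rfl⟩ := Nat.exists_eq_add_of_le h
    rw [gaussBinom_add_eq_mul_inv hq, norm_mul, norm_mul]
    gcongr
    exacts [hA _, hB _, hB _]

lemma tendsto_gaussBinom_add (hq : ‖q‖ < 1) {ι : Type*} {l : Filter ι} {a b : ι → ℕ}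
    (ha : Tendsto a l atTop) (hb : Tendsto b l atTop) :
    Tendsto (fun i ↦ gaussBinom q (a i + b i) (a i)) l (𝓝 (∏' i : ℕ, (1 - q ^ (i + 1)))⁻¹) := by
  simp only [gaussBinom_add_eq_mul_inv hq]
  have hinv := tendsto_inv_qPochhammer hq
  have hab := (tendsto_qPochhammer hq).comp (ha.atTop_add_atTop hb)
  simpa [tprod_one_sub_pow_succ_ne_zero hq] using
    hab.mul ((hinv.comp ha).mul (hinv.comp hb))

end Limits

section TripleProduct

variable {K : Type*} [NormedField K] {q z : K}

lemma summable_norm_mul_pow_two_mul_add_one (x : K) (hq : ‖q‖ < 1) :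
    Summable fun i : ℕ ↦ ‖x * q ^ (2 * i + 1)‖ := by
  simp only [norm_mul]
  exact ((summable_norm_geometric_of_norm_lt_one hq).comp_injective
    (i := fun i ↦ 2 * i + 1) fun i j h ↦ by simpa using h).mul_left _

variable [CompleteSpace K]

lemma multipliable_one_add_mul_pow_two_mul_add_one (x : K) (hq : ‖q‖ < 1) :
    Multipliable fun i : ℕ ↦ 1 + x * q ^ (2 * i + 1) :=
  multipliable_one_add_of_summable (summable_norm_mul_pow_two_mul_add_one x hq)

lemma tendsto_gaussBinom_two_mul_add_toNat (hq : ‖q‖ < 1) (n : ℤ) :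
    Tendsto (fun m : ℕ ↦ gaussBinom q (2 * m) (m + n).toNat) atTop
      (𝓝 (∏' i : ℕ, (1 - q ^ (i + 1)))⁻¹) := by
  have htop (k : ℤ) : Tendsto (fun m : ℕ ↦ (m + k).toNat) atTop atTop := by
    refine tendsto_atTop.mpr fun b ↦ ?_
    filter_upwards [eventually_ge_atTop (b + k.natAbs)] with m hm
    omega
  refine (tendsto_gaussBinom_add hq (htop n) (htop (-n))).congr' ?_
  filter_upwards [eventually_ge_atTop n.natAbs] with m hm
  congr 1
  omega

theorem jacobi_triple_product (hq₀ : q ≠ 0) (hq : ‖q‖ < 1) (hz : z ≠ 0) :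
    (∏' i : ℕ, ((1 + z * q ^ (2 * i + 1)) * (1 + z⁻¹ * q ^ (2 * i + 1)))) *
      ∏' i : ℕ, (1 - (q ^ 2) ^ (i + 1)) = ∑' n : ℤ, z ^ n * q ^ n ^ 2 := by
  have hq' : ‖q ^ 2‖ < 1 := norm_pow_lt_one hq two_ne_zero
  set P := ∏' i : ℕ, (1 - (q ^ 2) ^ (i + 1))
  let F (m : ℕ) (n : ℤ) : K := z ^ n * q ^ n ^ 2 * gaussBinom (q ^ 2) (2 * m) (m + n).toNat
  have hprod := ((multipliable_one_add_mul_pow_two_mul_add_one z hq).mul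
    (multipliable_one_add_mul_pow_two_mul_add_one z⁻¹ hq)).hasProd.tendsto_prod_nat
  have hfinite (m : ℕ) : ∑' n : ℤ, (Icc (-m : ℤ) m : Set ℤ).indicator (F m) n =
      ∏ i ∈ range m, ((1 + z * q ^ (2 * i + 1)) * (1 + z⁻¹ * q ^ (2 * i + 1))) := by
    rw [jacobi_triple_product_finite hq₀ hz, sum_eq_tsum_indicator]
  obtain ⟨C, hC⟩ := exists_norm_gaussBinom_le hq'
  have hlim : Tendsto (fun m : ℕ ↦ ∑' n : ℤ, (Icc (-m : ℤ) m : Set ℤ).indicator (F m) n) atTop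
      (𝓝 (∑' n : ℤ, z ^ n * q ^ n ^ 2 * P⁻¹)) := by
    refine tendsto_tsum_of_dominated_convergence
      ((summable_norm_zpow_mul_zpow_sq z hq).mul_right C) (fun n ↦ ?_) (.of_forall fun m n ↦ ?_)
    · refine ((tendsto_gaussBinom_two_mul_add_toNat hq' n).const_mul _).congr' ?_
      filter_upwards [eventually_ge_atTop n.natAbs] with m hm
      rw [Set.indicator_of_mem (mem_coe.mpr (mem_Icc.mpr ⟨by omega, by omega⟩))]
    · refine (norm_indicator_le_norm_self _ _).trans ?_
      rw [norm_mul]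
      gcongr
      exact hC _ _
  simp only [hfinite] at hlim
  rw [tendsto_nhds_unique hprod hlim, tsum_mul_right, mul_assoc,
    inv_mul_cancel₀ (tprod_one_sub_pow_succ_ne_zero hq'), mul_one]

end TripleProduct

section FockSpace

section Field

variable {K : Type*} [Field K] {q z : K}

/-- The factor by which occupying the mode `s` multiplies the contribution of a basis vector to the
graded dimension. -/
def modeWeight (q z : K) (s : ℕ) : K :=
  (if Odd s then z else z⁻¹) * q ^ (2 * s + 1)

lemma zpow_chg_mul_pow_wgt (q : K) (hz : z ≠ 0) (S : Finset ℕ) :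
    z ^ chg S * q ^ wgt S = ∏ s ∈ S, modeWeight q z s := by
  simp only [modeWeight, prod_mul_distrib, prod_ite, prod_const, Nat.not_odd_iff_even,
    prod_pow_eq_pow_sum, chg, wgt, zpow_sub₀ hz, zpow_natCast, inv_pow, div_eq_mul_inv]

lemma modeWeight_two_mul (hq : q ≠ 0) (z : K) (i : ℕ) :
    modeWeight q z (2 * i) = (z * q)⁻¹ * (q ^ 2) ^ (2 * i + 1) := by
  rw [modeWeight, if_neg (by simp)]
  field_simp
  ring

lemma modeWeight_two_mul_add_one (q z : K) (i : ℕ) :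
    modeWeight q z (2 * i + 1) = z * q * (q ^ 2) ^ (2 * i + 1) := by
  rw [modeWeight, if_pos (odd_two_mul_add_one i)]
  ring

lemma zpow_mul_zpow_two_mul_sq_add (hq : q ≠ 0) (z : K) (n : ℤ) :
    z ^ n * q ^ (2 * n ^ 2 + n) = (z * q) ^ n * (q ^ 2) ^ n ^ 2 := by
  rw [mul_zpow, zpow_add₀ hq, zpow_mul]
  norm_cast
  ring

end Field

variable {K : Type*} [NormedField K] {q z : K}

lemma summable_norm_modeWeight (hq : ‖q‖ < 1) (z : K) :
    Summable fun s ↦ ‖modeWeight q z s‖ := by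
  refine ((summable_norm_mul_pow_two_mul_add_one z hq).add
    (summable_norm_mul_pow_two_mul_add_one z⁻¹ hq)).of_nonneg_of_le (fun _ ↦ norm_nonneg _)
    fun s ↦ ?_
  unfold modeWeight
  split_ifs
  · exact le_add_of_nonneg_right (norm_nonneg _)
  · exact le_add_of_nonneg_left (norm_nonneg _)

lemma summable_norm_zpow_chg_mul_pow_wgt (hq : ‖q‖ < 1) (hz : z ≠ 0) :
    Summable fun S : Finset ℕ ↦ ‖z ^ chg S * q ^ wgt S‖ := by
  simp only [zpow_chg_mul_pow_wgt q hz, norm_prod]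
  exact summable_finsetProd_of_summable_nonneg (fun _ ↦ norm_nonneg _)
    (summable_norm_modeWeight hq z)

variable [CompleteSpace K]

theorem tsum_zpow_chg_mul_pow_wgt (hq₀ : q ≠ 0) (hq : ‖q‖ < 1) (hz : z ≠ 0) :
    ∑' S : Finset ℕ, z ^ chg S * q ^ wgt S =
      ∏' i : ℕ, ((1 + z * q * (q ^ 2) ^ (2 * i + 1)) *
        (1 + (z * q)⁻¹ * (q ^ 2) ^ (2 * i + 1))) := by
  have hq' : ‖q ^ 2‖ < 1 := norm_pow_lt_one hq two_ne_zero
  have heven : Multipliable fun i ↦ 1 + modeWeight q z (2 * i) := by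
    simpa only [modeWeight_two_mul hq₀] using
      multipliable_one_add_mul_pow_two_mul_add_one (z * q)⁻¹ hq'
  have hodd : Multipliable fun i ↦ 1 + modeWeight q z (2 * i + 1) := by
    simpa only [modeWeight_two_mul_add_one] using
      multipliable_one_add_mul_pow_two_mul_add_one (z * q) hq'
  calc ∑' S : Finset ℕ, z ^ chg S * q ^ wgt S
      = ∏' s, (1 + modeWeight q z s) := by
        simp only [zpow_chg_mul_pow_wgt q hz]
        exact (tprod_one_add
          (summable_finsetProd_of_summable_norm (summable_norm_modeWeight hq z))).symm
    _ = ∏' i, ((1 + modeWeight q z (2 * i + 1)) * (1 + modeWeight q z (2 * i))) := by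
        rw [hodd.tprod_mul heven, mul_comm,
          tprod_even_mul_odd (f := fun s ↦ 1 + modeWeight q z s) heven hodd]
    _ = _ := by simp only [modeWeight_two_mul hq₀, modeWeight_two_mul_add_one]

theorem bosonic_graded_dimension_general (hq₀ : q ≠ 0) (hq : ‖q‖ < 1) (hz : z ≠ 0) :
    Summable (fun S : Finset ℕ ↦ ‖z ^ chg S * q ^ wgt S‖) ∧
    Multipliable (fun i : ℕ ↦ 1 - q ^ (4 * i + 4)) ∧
    Summable (fun n : ℤ ↦ ‖z ^ n * q ^ (2 * n ^ 2 + n)‖) ∧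
    (∑' S : Finset ℕ, z ^ chg S * q ^ wgt S) * ∏' i : ℕ, (1 - q ^ (4 * i + 4))
      = ∑' n : ℤ, z ^ n * q ^ (2 * n ^ 2 + n) := by
  have hq' : ‖q ^ 2‖ < 1 := norm_pow_lt_one hq two_ne_zero
  have hpow (i : ℕ) : q ^ (4 * i + 4) = ((q ^ 2) ^ 2) ^ (i + 1) := by ring
  simp only [hpow, zpow_mul_zpow_two_mul_sq_add hq₀]
  refine ⟨summable_norm_zpow_chg_mul_pow_wgt hq hz,
    multipliable_one_sub_pow_succ (norm_pow_lt_one hq' two_ne_zero),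
    summable_norm_zpow_mul_zpow_sq (z * q) hq', ?_⟩
  rw [tsum_zpow_chg_mul_pow_wgt hq₀ hq hz]
  exact jacobi_triple_product (pow_ne_zero 2 hq₀) hq' (mul_ne_zero hz hq₀)

end FockSpace

/-- Bosonic graded dimension formula for `F^{⊗1/2}` (with `q` replaced by `q²`):
`(∑_{S finite ⊆ ℕ} z^{c(S)} q^{w(S)}) · ∏_{i=0}^∞ (1 − q^{4i+4}) = ∑_{n∈ℤ} z^n q^{2n²+n}`,
with the two sums absolutely convergent and the infinite product convergent. -/
theorem bosonic_graded_dimension (q z : ℂ) (hq0 : 0 < ‖q‖) (hq1 : ‖q‖ < 1) (hz : z ≠ 0) :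
    Summable (fun S : Finset ℕ => ‖z ^ chg S * q ^ wgt S‖) ∧
    Multipliable (fun i : ℕ => 1 - q ^ (4 * i + 4)) ∧
    Summable (fun n : ℤ => ‖z ^ n * q ^ (2 * n ^ 2 + n)‖) ∧
    (∑' S : Finset ℕ, z ^ chg S * q ^ wgt S) * ∏' i : ℕ, (1 - q ^ (4 * i + 4))
      = ∑' n : ℤ, z ^ n * q ^ (2 * n ^ 2 + n) :=
  bosonic_graded_dimension_general (norm_pos_iff.mp hq0) hq1 hz
end
end

section
/- Let V be a complex vector space, let (L_n)_{n∈ℤ} be operators on V satisfying the Virasoro relations with central charge c ∈ ℂ, and let N be a positive integer. Then the operators L'_n := (1/N) L_{Nn} + ((N²−1)/(24N)) · c · δ_{n,0} · id_V satisfy the Virasoro relations with central charge N·c. -/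
/-- Operators `(T_n)_{n∈ℤ}` on a complex vector space `V` satisfy the Virasoro relations
with central charge `c ∈ ℂ` if
`T_m T_n − T_n T_m = (m−n) T_{m+n} + δ_{m,−n} ((m³−m)/12) c · id_V` for all `m, n`. -/
def VirasoroRel {V : Type*} [AddCommGroup V] [Module ℂ V]
    (T : ℤ → Module.End ℂ V) (c : ℂ) : Prop :=
  ∀ m n : ℤ, T m * T n - T n * T m
    = ((m - n : ℤ) : ℂ) • T (m + n)
      + (if m = -n then ((m ^ 3 - m : ℤ) : ℂ) / 12 * c else 0) • (1 : Module.End ℂ V)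

/-!
Restricting to the modes `N n` and dividing by `N` preserves the linear term `(m - n) T (m + n)` of
the Virasoro relations, but scales the cubic part of the central term by `N` and its linear part by
`N⁻¹`. Adding a central element to the zero mode changes only the linear part, so the balance
between the two can be restored, and their common coefficient is then `N` times the original one.
-/

/-- Elements `T n` (`n ∈ ℤ`) of a Lie algebra satisfy the relations of a central extension of the
Witt algebra, with cocycle `δ_{m,-n} (α m³ - β m)` along `z`. The coefficients of the cubic and the
linear part are kept independent because dilating the modes scales them differently; the Virasoro
relations with central charge `c` are the case `z = 1`, `α = β = c / 12`. -/
def CubicWittRel {R 𝔤 : Type*} [CommRing R] [LieRing 𝔤] [LieAlgebra R 𝔤]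
    (z : 𝔤) (T : ℤ → 𝔤) (α β : R) : Prop :=
  ∀ m n : ℤ, ⁅T m, T n⁆
    = ((m - n : ℤ) : R) • T (m + n)
      + (if m + n = 0 then α * (m : R) ^ 3 - β * (m : R) else 0) • z

namespace CubicWittRel

variable {R 𝔤 : Type*} [CommRing R] [LieRing 𝔤] [LieAlgebra R 𝔤] {z : 𝔤} {T : ℤ → 𝔤} {α β : R}

theorem dilate (hT : CubicWittRel z T α β) {N : ℤ} (hN : N ≠ 0) {u : R} (hu : u * (N : R) = 1) :
    CubicWittRel z (fun n => u • T (N * n)) ((N : R) * α) (u * β) := by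
  intro m n
  have sum_eq_zero_iff : N * (m + n) = 0 ↔ m + n = 0 := mul_eq_zero_iff_left hN
  have linear_coeff : u * u * ((N * m - N * n : ℤ) : R) = ((m - n : ℤ) : R) * u := by
    push_cast
    linear_combination u * ((m : R) - n) * hu
  have central_coeff :
      u * u * (α * ((N * m : ℤ) : R) ^ 3 - β * ((N * m : ℤ) : R))
        = (N : R) * α * (m : R) ^ 3 - u * β * (m : R) := by
    push_cast
    linear_combination ((u * N + 1) * N * α * (m : R) ^ 3 - u * β * (m : R)) * hu
  rw [smul_lie, lie_smul, hT, ← mul_add]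
  simp only [sum_eq_zero_iff, smul_add, smul_smul, ← mul_assoc, linear_coeff, mul_ite,
    central_coeff, mul_zero]

theorem add_central_zero_mode (hT : CubicWittRel z T α β) (hz : ∀ x : 𝔤, ⁅x, z⁆ = 0) (s : R) :
    CubicWittRel z (fun n => T n + (if n = 0 then s else 0) • z) α (β + 2 * s) := by
  intro m n
  have central_lie (x : 𝔤) : ⁅z, x⁆ = 0 := by rw [← lie_skew, hz, neg_zero]
  have bracket_eq (x y : 𝔤) (a b : R) : ⁅x + a • z, y + b • z⁆ = ⁅x, y⁆ := by
    simp only [add_lie, lie_add, smul_lie, lie_smul, hz, central_lie, smul_zero, add_zero]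
  rw [bracket_eq, hT m n]
  by_cases hmn : m + n = 0
  · obtain rfl : n = -m := by lia
    simp only [add_neg_cancel, if_true]
    match_scalars <;> ring
  · simp only [if_neg hmn, zero_smul, add_zero]

end CubicWittRel

theorem virasoro_rescaled_modes_general {K 𝔤 : Type*} [Field K] [LieRing 𝔤] [LieAlgebra K 𝔤]
    {z : 𝔤} {T : ℤ → 𝔤} {c : K} {N : ℤ} (h24 : (24 : K) ≠ 0) (hN : (N : K) ≠ 0)
    (hz : ∀ x : 𝔤, ⁅x, z⁆ = 0) (hT : CubicWittRel z T (c / 12) (c / 12)) :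
    CubicWittRel z
      (fun n => (N : K)⁻¹ • T (N * n)
        + (if n = 0 then ((N : K) ^ 2 - 1) / (24 * (N : K)) * c else 0) • z)
      ((N : K) * c / 12) ((N : K) * c / 12) := by
  have hN' : N ≠ 0 := by
    rintro rfl
    exact hN Int.cast_zero
  have h12 : (12 : K) ≠ 0 := fun h => h24 (by linear_combination 2 * h)
  have balance :
      (N : K)⁻¹ * (c / 12) + 2 * (((N : K) ^ 2 - 1) / (24 * (N : K)) * c) = (N : K) * c / 12 := by
    field_simp
    ring
  have rescaled := (hT.dilate hN' (inv_mul_cancel₀ hN)).add_central_zero_mode hz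
    (((N : K) ^ 2 - 1) / (24 * (N : K)) * c)
  rwa [balance, ← mul_div_assoc] at rescaled

attribute [local instance] LieRing.ofAssociativeRing

theorem virasoroRel_iff_cubicWittRel {V : Type*} [AddCommGroup V] [Module ℂ V]
    {T : ℤ → Module.End ℂ V} {c : ℂ} :
    VirasoroRel T c ↔ CubicWittRel 1 T (c / 12) (c / 12) := by
  refine forall₂_congr fun m n => ?_
  have cocycle_eq : ((m ^ 3 - m : ℤ) : ℂ) / 12 * c = c / 12 * (m : ℂ) ^ 3 - c / 12 * (m : ℂ) := by
    push_cast
    ring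
  simp only [Ring.lie_def, cocycle_eq, eq_neg_iff_add_eq_zero]

/-- "Half the modes, N-tuple the charge": if `(L_n)_{n∈ℤ}` satisfy the Virasoro relations
with central charge `c` and `N ≥ 1`, then the operators
`L'_n := (1/N) L_{Nn} + ((N²−1)/(24N)) c δ_{n,0} id_V` satisfy the Virasoro relations with
central charge `N·c`. -/
theorem virasoro_rescaled_modes {V : Type*} [AddCommGroup V] [Module ℂ V]
    (L : ℤ → Module.End ℂ V) (c : ℂ) (N : ℕ) (hN : 0 < N) (hL : VirasoroRel L c) :
    VirasoroRel
      (fun n => ((N : ℂ))⁻¹ • L ((N : ℤ) * n)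
        + (if n = 0 then ((N : ℂ) ^ 2 - 1) / (24 * (N : ℂ)) * c else 0) • (1 : Module.End ℂ V))
      ((N : ℂ) * c) := by
  simpa only [virasoroRel_iff_cubicWittRel, Int.cast_natCast] using
    virasoro_rescaled_modes_general (by norm_num) (mod_cast hN.ne' : ((N : ℤ) : ℂ) ≠ 0)
      (fun x => (Commute.one_right x).lie_eq) (virasoroRel_iff_cubicWittRel.mp hL)
end

section
/- The operators L^{1/2}_m on the neutral fermion Fock space F satisfy the Virasoro relations with central charge 1/2: for all m, n ∈ ℤ, L^{1/2}_m ∘ L^{1/2}_n − L^{1/2}_n ∘ L^{1/2}_m = (m−n) L^{1/2}_{m+n} + δ_{m,−n} · ((m³−m)/24) · id_F. (These are the modes of the well-known Virasoro field L^{1/2}(z) = (1/2):∂_z φ^D(z) φ^D(z): of central charge 1/2 on F^{⊗1/2}.) -/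
noncomputable section

/-!
By the canonical anticommutation relations, `[L_m, a_k] = (k + (1 - m) / 2) a_{k - m}`. The Jacobi
identity then shows that `[L_m, L_n] - (m - n) L_{m + n}` commutes with every mode `a_k`. The vacuum
is the only vector, up to scalars, killed by all annihilation operators, and the creation operators
generate `F` from it, so such an operator is a scalar, namely its vacuum expectation value. Since
`L_m |0⟩ = 0` for `m ≥ 0` and `⟨0| L_m = 0` for `m ≤ 0`, only `⟨0| L_m L_{-m} |0⟩` with `m > 0`
matters; commuting `L_m` past the fermions of `L_{-m} |0⟩` evaluates it to
`(1 / 2) ∑_{0 ≤ i < m} i (i + (1 - m) / 2) = (m³ - m) / 24`.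
-/

open Filter
open scoped symmDiff

attribute [local instance] LieRing.ofAssociativeRing LieAlgebra.ofAssociativeAlgebra

/-- Shortcut instance: without it, unification does not recognise the operations of
`Module.End ℂ FockD` as those of a ring, so that `rw` fails with lemmas about rings. -/
local instance : Ring (Module.End ℂ FockD) := inferInstance

section FermionModes

/-- The site of `ℕ` on which `a_m` acts: `a_m` creates it for `m ≥ 0` and annihilates it for
`m < 0`. -/
def modeSite (m : ℤ) : ℕ := if 0 ≤ m then m.toNat else (-m - 1).toNat

lemma modeSite_eq_iff {i j : ℤ} : modeSite i = modeSite j ↔ i = j ∨ i + j = -1 := by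
  unfold modeSite
  split_ifs <;> omega

/-- The Jordan–Wigner sign `(-1)^#{s ∈ S : s > p}` carried by the fermion modes at site `p`. -/
def jordanWignerSign (p : ℕ) (S : Finset ℕ) : ℂ := (-1) ^ (S.filter (p < ·)).card

lemma jordanWignerSign_mul_self (p : ℕ) (S : Finset ℕ) :
    jordanWignerSign p S * jordanWignerSign p S = 1 := by
  simp [jordanWignerSign, ← mul_pow]

lemma jordanWignerSign_insert {p q : ℕ} {S : Finset ℕ} (hq : q ∉ S) :
    jordanWignerSign p (insert q S) = (if p < q then -1 else 1) * jordanWignerSign p S := by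
  unfold jordanWignerSign
  rw [Finset.filter_insert]
  split_ifs
  · rw [Finset.card_insert_of_notMem (by simp [hq]), pow_succ']
  · rw [one_mul]

lemma symmDiff_singleton_of_mem {α : Type*} [DecidableEq α] {a : α} {S : Finset α} (ha : a ∈ S) :
    S ∆ {a} = S.erase a := by
  grind [Finset.mem_symmDiff]

lemma symmDiff_singleton_of_notMem {α : Type*} [DecidableEq α] {a : α} {S : Finset α}
    (ha : a ∉ S) : S ∆ {a} = insert a S := by
  grind [Finset.mem_symmDiff]

lemma jordanWignerSign_symmDiff_singleton (p q : ℕ) (S : Finset ℕ) :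
    jordanWignerSign p (S ∆ {q}) = (if p < q then -1 else 1) * jordanWignerSign p S := by
  by_cases hq : q ∈ S
  · have h := jordanWignerSign_insert (p := p) (S.notMem_erase q)
    rw [Finset.insert_erase hq] at h
    rw [symmDiff_singleton_of_mem hq, h]
    split_ifs <;> simp
  · rw [symmDiff_singleton_of_notMem hq, jordanWignerSign_insert hq]

lemma aOp_eD_s14 (m : ℤ) (S : Finset ℕ) :
    aOp m (eD S) = if modeSite m ∈ S ↔ m < 0 then
      jordanWignerSign (modeSite m) S • eD (S ∆ {modeSite m}) else 0 := by
  have haVec : aOp m (eD S) = aVec m S := by simp [aOp, eD]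
  rw [haVec]
  rcases lt_or_ge m 0 with hm | hm <;> by_cases hS : modeSite m ∈ S <;>
    simp_all [aVec, modeSite, jordanWignerSign, not_le.mpr, not_lt.mpr,
      symmDiff_singleton_of_mem, symmDiff_singleton_of_notMem]

lemma end_ext_eD {f g : Module.End ℂ FockD} (h : ∀ S, f (eD S) = g (eD S)) : f = g :=
  Finsupp.lhom_ext' fun S => LinearMap.ext_ring (h S)

lemma aOp_mul_add_mul_of_modeSite_ne {i j : ℤ} (h : modeSite i ≠ modeSite j) :
    aOp i * aOp j + aOp j * aOp i = 0 := by
  refine end_ext_eD fun S => ?_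
  have hi : modeSite i ∈ S ∆ {modeSite j} ↔ modeSite i ∈ S := by simp [Finset.mem_symmDiff, h]
  have hj : modeSite j ∈ S ∆ {modeSite i} ↔ modeSite j ∈ S := by
    simp [Finset.mem_symmDiff, h.symm]
  by_cases hi' : modeSite i ∈ S ↔ i < 0 <;> by_cases hj' : modeSite j ∈ S ↔ j < 0 <;>
    simp only [LinearMap.add_apply, Module.End.mul_apply, LinearMap.zero_apply, aOp_eD_s14, hi, hj,
      hi', hj', if_true, if_false, map_smul, map_zero, smul_zero, add_zero]
  rw [symmDiff_right_comm S, smul_smul, smul_smul, ← add_smul,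
    jordanWignerSign_symmDiff_singleton, jordanWignerSign_symmDiff_singleton]
  convert zero_smul ℂ _
  rcases lt_or_gt_of_ne h with h | h <;> simp only [h, h.not_gt, if_true, if_false] <;> ring

lemma aOp_mul_self (i : ℤ) : aOp i * aOp i = 0 := by
  refine end_ext_eD fun S => ?_
  by_cases hS : modeSite i ∈ S <;> by_cases hi : i < 0 <;>
    simp [aOp_eD_s14, Finset.mem_symmDiff, hS, hi]

lemma aOp_mul_add_mul_neg_one_sub (i : ℤ) :
    aOp i * aOp (-1 - i) + aOp (-1 - i) * aOp i = 1 := by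
  have hsite : modeSite (-1 - i) = modeSite i := modeSite_eq_iff.mpr (Or.inr (by ring))
  have hneg : -1 - i < 0 ↔ ¬ i < 0 := by omega
  refine end_ext_eD fun S => ?_
  by_cases hS : modeSite i ∈ S <;> by_cases hi : i < 0 <;>
    simp [aOp_eD_s14, hsite, hneg, Finset.mem_symmDiff, hS, hi, smul_smul,
      jordanWignerSign_symmDiff_singleton, jordanWignerSign_mul_self]

theorem aOp_anticommutator (i j : ℤ) :
    aOp i * aOp j + aOp j * aOp i = if i + j = -1 then 1 else 0 := by
  split_ifs with h
  · obtain rfl : j = -1 - i := by omega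
    exact aOp_mul_add_mul_neg_one_sub i
  · rcases eq_or_ne i j with rfl | hij
    · rw [aOp_mul_self, add_zero]
    · exact aOp_mul_add_mul_of_modeSite_ne (by simp [modeSite_eq_iff, hij, h])

lemma aOp_apply (m : ℤ) (x : FockD) (S : Finset ℕ) :
    aOp m x S = if modeSite m ∈ S ↔ 0 ≤ m then
      jordanWignerSign (modeSite m) S * x (S ∆ {modeSite m}) else 0 := by
  induction x using Finsupp.induction_linear with
  | zero => simp
  | add x y hx hy =>
    rw [map_add, Finsupp.add_apply, hx, hy, Finsupp.add_apply]
    split_ifs <;> ring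
  | single R c =>
    have hsingle : Finsupp.single R c = c • eD R := by simp [eD]
    rw [hsingle, map_smul, aOp_eD_s14]
    by_cases hR : R = S ∆ {modeSite m}
    · subst hR
      by_cases hS : modeSite m ∈ S <;> by_cases hm : m < 0 <;>
        simp [eD, Finset.mem_symmDiff, hS, hm, not_le.mpr, not_lt.mp,
          jordanWignerSign_symmDiff_singleton, mul_comm]
    · have hS : R ∆ {modeSite m} ≠ S := fun h => hR (by rw [← h, symmDiff_symmDiff_cancel_right])
      split_ifs <;> simp [eD, hR, hS]

end FermionModes

section Vacuum

/-- The functional `x ↦ ⟨0| x⟩` taking the coefficient of the vacuum `e_∅`. -/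
def vacuumCoeff : FockD →ₗ[ℂ] ℂ := Finsupp.lapply ∅

lemma vacuumCoeff_vacuum : vacuumCoeff (eD ∅) = 1 := by simp [vacuumCoeff, eD]

lemma aOp_vacuum_of_neg {i : ℤ} (hi : i < 0) : aOp i (eD ∅) = 0 := by simp [aOp_eD_s14, hi]

lemma vacuumCoeff_aOp_of_nonneg {i : ℤ} (hi : 0 ≤ i) (x : FockD) : vacuumCoeff (aOp i x) = 0 := by
  simp [vacuumCoeff, aOp_apply, hi]

lemma eq_vacuumCoeff_smul_of_aOp_eq_zero {x : FockD} (hx : ∀ i < 0, aOp i x = 0) :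
    x = vacuumCoeff x • eD ∅ := by
  ext S
  rcases S.eq_empty_or_nonempty with rfl | ⟨p, hp⟩
  · simp [vacuumCoeff, eD]
  · have h := DFunLike.congr_fun (hx (-1 - p) (by omega)) (S ∆ {p})
    have hsite : modeSite (-1 - p) = p := by simp [modeSite]; omega
    have hxS : x S = 0 := by
      have hcond : p ∈ S ∆ {p} ↔ (0 : ℤ) ≤ -1 - p :=
        iff_of_false (by simp [Finset.mem_symmDiff, hp]) (by omega)
      rw [aOp_apply, hsite, if_pos hcond] at h
      simpa [jordanWignerSign] using h
    simp [hxS, eD, Finset.ne_empty_of_mem hp]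

/-- Schur's lemma for the Fock representation. The vacuum line is cut out by the annihilation
operators, and the creation operators generate `F` from it. -/
lemma eq_vacuumCoeff_smul_one_of_commute {T : Module.End ℂ FockD}
    (hT : ∀ k, Commute T (aOp k)) : T = vacuumCoeff (T (eD ∅)) • 1 := by
  have hcomm : ∀ k x, T (aOp k x) = aOp k (T x) := fun k => LinearMap.congr_fun (hT k)
  refine end_ext_eD fun S => ?_
  induction S using Finset.induction_on_max with
  | empty =>
    refine eq_vacuumCoeff_smul_of_aOp_eq_zero fun i hi => ?_
    rw [← hcomm, aOp_vacuum_of_neg hi, map_zero]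
  | insert p S hlt ih =>
    have hcreate : eD (insert p S) = aOp p (eD S) := by
      have hp : p ∉ S := fun hp => (hlt p hp).false
      have hsign : jordanWignerSign p S = 1 := by
        simp [jordanWignerSign, Finset.filter_false_of_mem fun s hs => (hlt s hs).not_gt]
      have hsite : modeSite p = p := by simp [modeSite]
      simp [aOp_eD_s14, hsite, hp, hsign, symmDiff_singleton_of_notMem]
    rw [hcreate, hcomm, ih]
    simp

end Vacuum

section NormalOrdering

lemma NO_of_nonneg {i : ℤ} (hi : 0 ≤ i) (j : ℤ) : NO i j = aOp i * aOp j := if_pos hi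

lemma NO_of_neg {i : ℤ} (hi : i < 0) (j : ℤ) : NO i j = -(aOp j * aOp i) := if_neg hi.not_ge

lemma NO_vacuum_of_neg {i j : ℤ} (h : i < 0 ∨ j < 0) : NO i j (eD ∅) = 0 := by
  rcases lt_or_ge i 0 with hi | hi
  · simp [NO_of_neg hi, aOp_vacuum_of_neg hi]
  · simp [NO_of_nonneg hi, aOp_vacuum_of_neg (h.resolve_left hi.not_gt)]

lemma vacuumCoeff_NO_of_nonneg {i j : ℤ} (h : 0 ≤ i ∨ 0 ≤ j) (x : FockD) :
    vacuumCoeff (NO i j x) = 0 := by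
  rcases lt_or_ge i 0 with hi | hi
  · simp [NO_of_neg hi, vacuumCoeff_aOp_of_nonneg (h.resolve_left hi.not_ge)]
  · simp [NO_of_nonneg hi, vacuumCoeff_aOp_of_nonneg hi]

lemma lie_mul_eq_anticommutators {R : Type*} [Ring R] (x y z : R) :
    ⁅x * y, z⁆ = x * (y * z + z * y) - (x * z + z * x) * y := by
  rw [Ring.lie_def]
  noncomm_ring

theorem lie_NO_aOp (i j k : ℤ) :
    ⁅NO i j, aOp k⁆ = (if j + k = -1 then aOp i else 0) - (if i + k = -1 then aOp j else 0) := by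
  rcases lt_or_ge i 0 with hi | hi
  · rw [NO_of_neg hi, neg_lie, lie_mul_eq_anticommutators, aOp_anticommutator, aOp_anticommutator]
    split_ifs <;> simp
  · rw [NO_of_nonneg hi, lie_mul_eq_anticommutators, aOp_anticommutator, aOp_anticommutator]
    split_ifs <;> simp

lemma eventually_aOp_eq_zero (x : FockD) : ∀ᶠ i in atBot, aOp i x = 0 := by
  induction x using Finsupp.induction_linear with
  | zero => simp
  | add x y hx hy => filter_upwards [hx, hy] with i hxi hyi using by simp [hxi, hyi]
  | single S c =>
    filter_upwards [eventually_lt_atBot (-(S.sup id : ℕ) - 1 : ℤ)] with i hi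
    have hsup : S.sup id < modeSite i := by unfold modeSite; split_ifs <;> omega
    have hsite : modeSite i ∉ S := fun h => (Finset.le_sup (f := id) h).not_gt hsup
    have hneg : i < 0 := by omega
    have hsingle : Finsupp.single S c = c • eD S := by simp [eD]
    simp [hsingle, aOp_eD_s14, hsite, hneg]

lemma hasFiniteSupport_smul_NO (f : ℤ → ℂ) (c : ℤ) (x : FockD) :
    (fun i => f i • NO i (c - i) x).HasFiniteSupport := by
  have hsub : Tendsto (c - ·) atTop atBot := by
    simpa only [sub_eq_add_neg] using tendsto_atBot_add_const_left _ c tendsto_neg_atTop_atBot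
  have hzero : ∀ᶠ i in cofinite, f i • NO i (c - i) x = 0 := by
    rw [Int.cofinite_eq, eventually_sup]
    constructor
    · filter_upwards [eventually_aOp_eq_zero x, eventually_lt_atBot 0] with i hx hi
      simp [NO_of_neg hi, hx]
    · filter_upwards [hsub.eventually (eventually_aOp_eq_zero x), eventually_ge_atTop 0]
        with i hx hi
      simp [NO_of_nonneg hi, hx]
  exact hzero

end NormalOrdering

section Virasoro

lemma hasFiniteSupport_LhalfD_summand (m : ℤ) (x : FockD) :
    (fun i : ℤ => (i : ℂ) • NO i (-m - i - 1) x).HasFiniteSupport := by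
  simpa only [sub_right_comm] using hasFiniteSupport_smul_NO (fun i => (i : ℂ)) (-m - 1) x

/-- `LhalfD m` as a linear operator on `F`. -/
def LhalfOp (m : ℤ) : Module.End ℂ FockD where
  toFun := LhalfD m
  map_add' x y := by
    simp only [LhalfD, map_add, smul_add]
    rw [finsum_add_distrib (hasFiniteSupport_LhalfD_summand m x)
      (hasFiniteSupport_LhalfD_summand m y), smul_add]
  map_smul' c x := by
    simp only [LhalfD, map_smul, smul_comm _ c, RingHom.id_apply, smul_finsum]

lemma LhalfOp_apply (m : ℤ) (x : FockD) :
    LhalfOp m x = (1 / 2 : ℂ) • ∑ᶠ i : ℤ, (i : ℂ) • NO i (-m - i - 1) x := rfl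

lemma map_LhalfOp {M : Type*} [AddCommGroup M] [Module ℂ M] (f : FockD →ₗ[ℂ] M) (m : ℤ)
    (x : FockD) : f (LhalfOp m x) = (1 / 2 : ℂ) • ∑ᶠ i : ℤ, (i : ℂ) • f (NO i (-m - i - 1) x) := by
  rw [LhalfOp_apply, map_smul, map_finsum f (hasFiniteSupport_LhalfD_summand m x)]
  simp only [map_smul]

lemma lie_LhalfOp_apply (m : ℤ) (f : Module.End ℂ FockD) (x : FockD) :
    ⁅LhalfOp m, f⁆ x = (1 / 2 : ℂ) • ∑ᶠ i : ℤ, (i : ℂ) • ⁅NO i (-m - i - 1), f⁆ x := by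
  have hf : (fun i : ℤ => (i : ℂ) • f (NO i (-m - i - 1) x)).HasFiniteSupport := by
    simpa only [Function.comp_def, map_smul] using
      (hasFiniteSupport_LhalfD_summand m x).fun_comp (map_zero f)
  simp only [Ring.lie_def, LinearMap.sub_apply, Module.End.mul_apply, smul_sub]
  rw [finsum_sub_distrib (hasFiniteSupport_LhalfD_summand m (f x)) hf, smul_sub, ← map_LhalfOp,
    LhalfOp_apply]

lemma finsum_ite_eq_sub_ite_eq {α M : Type*} [DecidableEq α] [AddCommGroup M] (f g : α → M)
    (a b : α) :
    ∑ᶠ i, ((if i = a then f i else 0) - (if i = b then g i else 0)) = f a - g b := by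
  have hsupp (h : α → M) (c : α) : (fun i => if i = c then h i else 0).HasFiniteSupport :=
    (Set.finite_singleton c).subset fun i hi => of_not_not fun hne => hi (if_neg hne)
  have hsum (h : α → M) (c : α) : ∑ᶠ i, (if i = c then h i else 0) = h c := by
    rw [finsum_eq_single _ c fun i hi => if_neg hi, if_pos rfl]
  rw [finsum_sub_distrib (hsupp f a) (hsupp g b), hsum, hsum]

theorem lie_LhalfOp_aOp (m k : ℤ) :
    ⁅LhalfOp m, aOp k⁆ = ((k : ℂ) + (1 - m) / 2) • aOp (k - m) := by
  refine LinearMap.ext fun x => ?_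
  have hsummand (i : ℤ) : (i : ℂ) • ⁅NO i (-m - i - 1), aOp k⁆ x =
      (if i = k - m then (i : ℂ) • aOp i x else 0) -
        (if i = -1 - k then (i : ℂ) • aOp (-m - i - 1) x else 0) := by
    have hi : i = k - m ↔ -m - i - 1 + k = -1 := by omega
    have hj : i = -1 - k ↔ i + k = -1 := by omega
    simp only [lie_NO_aOp, LinearMap.sub_apply, smul_sub, hi, hj]
    split_ifs <;> simp
  have hindex : -m - (-1 - k) - 1 = k - m := by ring
  rw [lie_LhalfOp_apply, finsum_congr hsummand, finsum_ite_eq_sub_ite_eq, hindex, ← sub_smul,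
    smul_smul, LinearMap.smul_apply]
  congr 1
  push_cast
  ring

lemma lie_LhalfOp_lie_aOp (m n k : ℤ) :
    ⁅⁅LhalfOp m, LhalfOp n⁆, aOp k⁆ = ((m - n : ℤ) : ℂ) • ⁅LhalfOp (m + n), aOp k⁆ := by
  have hindex : k - n - m = k - (m + n) := by ring
  have hindex_swap : k - m - n = k - (m + n) := by ring
  rw [lie_lie, lie_LhalfOp_aOp n, lie_LhalfOp_aOp m, lie_LhalfOp_aOp, lie_smul, lie_smul,
    lie_LhalfOp_aOp, lie_LhalfOp_aOp, hindex, hindex_swap, smul_smul, smul_smul, smul_smul,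
    ← sub_smul]
  congr 1
  push_cast
  ring

lemma commute_lie_LhalfOp_sub_smul_aOp (m n k : ℤ) :
    Commute (⁅LhalfOp m, LhalfOp n⁆ - ((m - n : ℤ) : ℂ) • LhalfOp (m + n)) (aOp k) := by
  rw [commute_iff_lie_eq, sub_lie, smul_lie, lie_LhalfOp_lie_aOp, sub_self]

end Virasoro

section CentralCharge

lemma LhalfOp_vacuum_of_nonneg {m : ℤ} (hm : 0 ≤ m) : LhalfOp m (eD ∅) = 0 := by
  have hNO (i : ℤ) : NO i (-m - i - 1) (eD ∅) = 0 := NO_vacuum_of_neg (by omega)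
  simp [LhalfOp_apply, hNO]

lemma vacuumCoeff_LhalfOp_of_nonpos {m : ℤ} (hm : m ≤ 0) (x : FockD) :
    vacuumCoeff (LhalfOp m x) = 0 := by
  have hNO (i : ℤ) : vacuumCoeff (NO i (-m - i - 1) x) = 0 :=
    vacuumCoeff_NO_of_nonneg (by omega) x
  simp [map_LhalfOp, hNO]

lemma vacuumCoeff_LhalfOp_vacuum (m : ℤ) : vacuumCoeff (LhalfOp m (eD ∅)) = 0 := by
  rcases le_total 0 m with hm | hm
  · rw [LhalfOp_vacuum_of_nonneg hm, map_zero]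
  · exact vacuumCoeff_LhalfOp_of_nonpos hm _

lemma LhalfOp_neg_vacuum (p : ℕ) : LhalfOp (-p) (eD ∅) =
    (1 / 2 : ℂ) • ∑ i ∈ Finset.range p, (i : ℂ) • (aOp i * aOp (p - 1 - i)) (eD ∅) := by
  rw [LhalfOp_apply, finsum_eq_sum_of_support_subset
    (s := (Finset.range p).map Nat.castEmbedding), Finset.sum_map]
  · refine congrArg _ (Finset.sum_congr rfl fun i _ => ?_)
    have hindex : -(-(p : ℤ)) - i - 1 = p - 1 - i := by ring
    rw [Nat.castEmbedding_apply, hindex, NO_of_nonneg i.cast_nonneg, Int.cast_natCast]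
  · refine Function.support_subset_iff'.mpr fun i hi => ?_
    have hout : i < 0 ∨ (p : ℤ) ≤ i := by
      by_contra! hin
      exact hi (by simpa using ⟨i.toNat, by omega, by omega⟩)
    rw [NO_vacuum_of_neg (by omega), smul_zero]

lemma vacuumCoeff_aOp_mul_vacuum (i : ℤ) {j : ℤ} (hj : 0 ≤ j) :
    vacuumCoeff ((aOp i * aOp j) (eD ∅)) = if i + j = -1 then 1 else 0 := by
  rw [eq_sub_of_add_eq (aOp_anticommutator i j), LinearMap.sub_apply, map_sub,
    Module.End.mul_apply (aOp j), vacuumCoeff_aOp_of_nonneg hj, sub_zero]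
  split_ifs <;> simp [vacuumCoeff_vacuum]

lemma vacuumCoeff_LhalfOp_aOp_mul_vacuum (m : ℤ) {i j : ℤ} (hi : 0 ≤ i) (hj : 0 ≤ j) :
    vacuumCoeff (LhalfOp m ((aOp i * aOp j) (eD ∅))) =
      if i + j = m - 1 then (i : ℂ) + (1 - m) / 2 else 0 := by
  have hmove (k : ℤ) (x : FockD) : LhalfOp m (aOp k x) =
      ((k : ℂ) + (1 - m) / 2) • aOp (k - m) x + aOp k (LhalfOp m x) :=
    eq_add_of_sub_eq (LinearMap.congr_fun (lie_LhalfOp_aOp m k) x)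
  have hvev := vacuumCoeff_aOp_mul_vacuum (i - m) hj
  rw [Module.End.mul_apply] at hvev ⊢
  rw [hmove, map_add, vacuumCoeff_aOp_of_nonneg hi, add_zero, map_smul, hvev, smul_eq_mul,
    mul_ite, mul_one, mul_zero]
  exact if_congr (by omega) rfl rfl

lemma sum_range_mul_add {K : Type*} [Field K] [CharZero K] (a : K) (p : ℕ) :
    ∑ i ∈ Finset.range p, (i : K) * (i + a) =
      p * (p - 1) * (2 * p - 1) / 6 + a * (p * (p - 1) / 2) := by
  induction p with
  | zero => simp
  | succ p ih =>
    rw [Finset.sum_range_succ, ih]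
    push_cast
    ring

lemma vacuumCoeff_LhalfOp_LhalfOp_neg_vacuum (m : ℤ) (p : ℕ) :
    vacuumCoeff (LhalfOp m (LhalfOp (-p) (eD ∅))) =
      if m = p then ((m ^ 3 - m : ℤ) : ℂ) / 24 else 0 := by
  have hsummand : ∀ i ∈ Finset.range p,
      vacuumCoeff (LhalfOp m ((i : ℂ) • (aOp i * aOp (p - 1 - i)) (eD ∅))) =
        if m = p then (i : ℂ) * (i + (1 - p) / 2) else 0 := by
    intro i hi
    rw [Finset.mem_range] at hi
    rw [map_smul, map_smul, vacuumCoeff_LhalfOp_aOp_mul_vacuum m (by omega) (by omega),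
      smul_eq_mul]
    have hsum : (i : ℤ) + (p - 1 - i) = m - 1 ↔ m = p := by omega
    simp only [hsum]
    split_ifs with h <;> simp [h]
  rw [LhalfOp_neg_vacuum, map_smul, map_smul, map_sum, map_sum, Finset.sum_congr rfl hsummand]
  split_ifs with h
  · subst h
    rw [sum_range_mul_add]
    push_cast
    rw [smul_eq_mul]
    ring
  · simp

lemma vacuumCoeff_lie_LhalfOp_vacuum (m n : ℤ) :
    vacuumCoeff (⁅LhalfOp m, LhalfOp n⁆ (eD ∅)) =
      if m = -n then ((m ^ 3 - m : ℤ) : ℂ) / 24 else 0 := by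
  rw [Ring.lie_def, LinearMap.sub_apply, map_sub, Module.End.mul_apply, Module.End.mul_apply]
  rcases le_total n 0 with hn | hn
  · obtain ⟨p, rfl⟩ : ∃ p : ℕ, n = -p := ⟨n.natAbs, by omega⟩
    rw [vacuumCoeff_LhalfOp_of_nonpos hn, sub_zero, vacuumCoeff_LhalfOp_LhalfOp_neg_vacuum, neg_neg]
  rcases le_total m 0 with hm | hm
  · obtain ⟨p, rfl⟩ : ∃ p : ℕ, m = -p := ⟨m.natAbs, by omega⟩
    rw [vacuumCoeff_LhalfOp_of_nonpos hm, zero_sub, vacuumCoeff_LhalfOp_LhalfOp_neg_vacuum]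
    have hnm : n = p ↔ -(p : ℤ) = -n := by omega
    simp only [← hnm]
    split_ifs with h
    · subst h
      push_cast
      ring
    · exact neg_zero
  · rw [LhalfOp_vacuum_of_nonneg hn, LhalfOp_vacuum_of_nonneg hm]
    split_ifs with h
    · obtain rfl : m = 0 := by omega
      simp
    · simp

end CentralCharge

/-- The operators `L^{1/2}_m` on the neutral fermion Fock space satisfy the Virasoro
relations with central charge `1/2`. -/
theorem virasoro_half_charge (m n : ℤ) (x : FockD) :
    LhalfD m (LhalfD n x) - LhalfD n (LhalfD m x)
      = ((m - n : ℤ) : ℂ) • LhalfD (m + n) x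
        + (if m = -n then ((m ^ 3 - m : ℤ) : ℂ) / 24 else 0) • x := by
  have hscalar := eq_vacuumCoeff_smul_one_of_commute (commute_lie_LhalfOp_sub_smul_aOp m n)
  rw [LinearMap.sub_apply, map_sub, vacuumCoeff_lie_LhalfOp_vacuum, LinearMap.smul_apply, map_smul,
    vacuumCoeff_LhalfOp_vacuum, smul_zero, sub_zero, sub_eq_iff_eq_add'] at hscalar
  exact LinearMap.congr_fun hscalar x
end
end

section
/- For every m ∈ ℤ one has the commutation relation L^{1/2}_0 ∘ h_m − h_m ∘ L^{1/2}_0 = −2m · h_m on F, and for every n ∈ ℤ one has L^{1/2}_0 v_n = (n² + n/2) · v_n. (Consequently, on the Heisenberg monomial h_{−k_ℓ}⋯h_{−k_1} v_n the operator L^{1/2}_0 acts by the scalar 2(k_1 + ⋯ + k_ℓ) + n² + n/2.) -/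
noncomputable section

/-! Each mode `a_m` is an eigenvector of `ad L₀`, where `L₀ := L^{1/2}_0`, with eigenvalue
`m + 1/2`: pairing the summands `i` and `-1 - i` gives `L₀ = ∑_{t ≥ 0} (t + 1/2) a_t a_{-1-t}`,
which is diagonal with eigenvalue `∑_{t ∈ S} (t + 1/2)` on `e_S`, and `a_m` either adds `m` to `S`
or removes `-m - 1` from it. By the Leibniz rule every bilinear `:a_i a_{k-i}:` has eigenvalue
`k + 1`, hence so has every locally finite combination of them; `h_m` is the case `k = -2m - 1`.
The eigenvalue of `L₀` on `v_n` is the sum of an arithmetic progression. -/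

open Filter Finset

section General

theorem exists_eq_natCast_or_eq_neg_one_sub (m : ℤ) : ∃ t : ℕ, m = t ∨ m = -1 - t := by
  rcases le_or_gt 0 m with hm | hm
  · exact ⟨m.toNat, .inl (by lia)⟩
  · exact ⟨(-1 - m).toNat, .inr (by lia)⟩

theorem finsum_int_eq_finsum_nat_add {M : Type*} [AddCommMonoid M] {f : ℤ → M}
    (hf : f.HasFiniteSupport) : ∑ᶠ i, f i = ∑ᶠ t : ℕ, (f t + f (-1 - t)) := by
  have nonneg_injective : Function.Injective fun t : ℕ => (t : ℤ) := Nat.cast_injective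
  have neg_injective : Function.Injective fun t : ℕ => -1 - (t : ℤ) := fun s t h => by
    simpa using h
  have disjoint_ranges : Disjoint (Set.range fun t : ℕ => (t : ℤ))
      (Set.range fun t : ℕ => -1 - (t : ℤ)) := by
    rw [Set.disjoint_left]
    rintro _ ⟨s, rfl⟩ ⟨t, h⟩
    lia
  have union_ranges : Set.range (fun t : ℕ => (t : ℤ)) ∪ Set.range (fun t : ℕ => -1 - (t : ℤ))
      = Set.univ := by
    refine Set.eq_univ_of_forall fun i => ?_
    obtain ⟨t, rfl | rfl⟩ := exists_eq_natCast_or_eq_neg_one_sub i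
    · exact .inl ⟨t, rfl⟩
    · exact .inr ⟨t, rfl⟩
  rw [← finsum_mem_univ, ← union_ranges, finsum_mem_union' disjoint_ranges (hf.inter_of_right _)
    (hf.inter_of_right _), finsum_mem_range nonneg_injective, finsum_mem_range neg_injective,
    finsum_add_distrib (hf.fun_comp_of_injective nonneg_injective)
      (hf.fun_comp_of_injective neg_injective)]

theorem lie_mul_eq_smul {R A : Type*} [CommRing R] [Ring A] [Algebra R A] {d a b : A} {v w : R}
    (ha : ⁅d, a⁆ = v • a) (hb : ⁅d, b⁆ = w • b) : ⁅d, a * b⁆ = (v + w) • (a * b) := by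
  have leibniz : ⁅d, a * b⁆ = ⁅d, a⁆ * b + a * ⁅d, b⁆ := by
    simp only [Ring.lie_def]
    noncomm_ring
  rw [leibniz, ha, hb, smul_mul_assoc, mul_smul_comm, add_smul]

theorem lie_smul_eq_smul {R A : Type*} [CommRing R] [Ring A] [Algebra R A] {d a : A} {w : R}
    (ha : ⁅d, a⁆ = w • a) (c : R) : ⁅d, c • a⁆ = w • c • a := by
  rw [smul_comm, ← ha, Ring.lie_def, Ring.lie_def, mul_smul_comm, smul_mul_assoc, smul_sub]

end General

namespace FockD

theorem hom_ext_s15 {A B : FockD →ₗ[ℂ] FockD} (h : ∀ S, A (eD S) = B (eD S)) : A = B :=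
  Finsupp.lhom_ext' fun S => LinearMap.ext_ring (h S)

section Modes

theorem aOp_eD (m : ℤ) (S : Finset ℕ) : aOp m (eD S) = aVec m S := by
  simp [aOp, eD]

theorem aOp_natCast_eD (t : ℕ) (S : Finset ℕ) :
    aOp t (eD S) = if t ∈ S then 0 else (-1 : ℂ) ^ #{s ∈ S | t < s} • eD (insert t S) := by
  simp [aOp_eD, aVec]

theorem aOp_neg_one_sub_eD (t : ℕ) (S : Finset ℕ) :
    aOp (-1 - t) (eD S) = if t ∈ S then (-1 : ℂ) ^ #{s ∈ S | t < s} • eD (S.erase t) else 0 := by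
  have index_eq : (-(-1 - (t : ℤ)) - 1).toNat = t := by lia
  rw [aOp_eD, aVec, if_neg (by lia), index_eq]

theorem aOp_natCast_aOp_neg_one_sub_eD (t : ℕ) (S : Finset ℕ) :
    aOp t (aOp (-1 - t) (eD S)) = if t ∈ S then eD S else 0 := by
  rw [aOp_neg_one_sub_eD]
  split_ifs with ht
  · have filter_erase : {s ∈ S.erase t | t < s} = {s ∈ S | t < s} := by grind
    rw [map_smul, aOp_natCast_eD, if_neg (notMem_erase t S), filter_erase, insert_erase ht,
      smul_smul, ← mul_pow, neg_one_mul, neg_neg, one_pow, one_smul]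
  · exact map_zero _

theorem eventually_aOp_eq_zero (x : FockD) : ∀ᶠ i in atBot, aOp i x = 0 := by
  induction x using Finsupp.induction_linear with
  | zero => simp
  | add x y hx hy =>
    filter_upwards [hx, hy] with i hxi hyi
    rw [map_add, hxi, hyi, add_zero]
  | single S c =>
    filter_upwards [eventually_lt_atBot (-1 - (S.sup id : ℕ) : ℤ)] with i hi
    obtain ⟨t, rfl⟩ : ∃ t : ℕ, i = -1 - t := ⟨(-1 - i).toNat, by lia⟩
    have ht : t ∉ S := fun ht => by
      have := le_sup (f := id) ht
      simp only [id_eq] at this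
      lia
    rw [← Finsupp.smul_single_one, map_smul, ← eD, aOp_neg_one_sub_eD, if_neg ht, smul_zero]

end Modes

section QuadraticSum

theorem eventually_NO_eq_zero (k : ℤ) (x : FockD) : ∀ᶠ i in cofinite, NO i (k - i) x = 0 := by
  rw [Int.cofinite_eq, eventually_sup]
  constructor
  · filter_upwards [eventually_lt_atBot 0, eventually_aOp_eq_zero x] with i hi hx
    simp [NO, hi.not_ge, hx]
  · have tendsto_index : Tendsto (fun i : ℤ => k - i) atTop atBot :=
      tendsto_atBot_add_const_left _ k tendsto_neg_atTop_atBot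
    filter_upwards [eventually_ge_atTop 0, tendsto_index.eventually (eventually_aOp_eq_zero x)]
      with i hi hx
    simp [NO, hi, hx]

theorem hasFiniteSupport_smul_NO (k : ℤ) (c : ℤ → ℂ) (x : FockD) :
    (fun i => c i • NO i (k - i) x).HasFiniteSupport := by
  refine Set.Finite.subset (eventually_cofinite.mp (eventually_NO_eq_zero k x)) fun i hi hx => hi ?_
  simp only [hx, smul_zero]

/-- The operator `∑_{i ∈ ℤ} c_i :a_i a_{k-i}:`, of which the `h_n` and the `L^{1/2}_m` are
instances. The sum is locally finite, so that `finsum` computes it pointwise. -/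
def quadraticSum (k : ℤ) (c : ℤ → ℂ) : FockD →ₗ[ℂ] FockD where
  toFun x := ∑ᶠ i, c i • NO i (k - i) x
  map_add' x y := by
    simp only [map_add, smul_add]
    exact finsum_add_distrib (hasFiniteSupport_smul_NO k c x) (hasFiniteSupport_smul_NO k c y)
  map_smul' z x := by
    simp only [map_smul, smul_comm _ z, RingHom.id_apply, smul_finsum]

theorem quadraticSum_apply (k : ℤ) (c : ℤ → ℂ) (x : FockD) :
    quadraticSum k c x = ∑ᶠ i, c i • NO i (k - i) x := rfl

theorem lie_quadraticSum {D : FockD →ₗ[ℂ] FockD} {k : ℤ} {w : ℂ}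
    (hD : ∀ i, ⁅D, NO i (k - i)⁆ = w • NO i (k - i)) (c : ℤ → ℂ) :
    ⁅D, quadraticSum k c⁆ = w • quadraticSum k c := by
  refine LinearMap.ext fun x => ?_
  have hDx (i : ℤ) : D (NO i (k - i) x) - NO i (k - i) (D x) = w • NO i (k - i) x :=
    LinearMap.congr_fun (hD i) x
  have finite_support := hasFiniteSupport_smul_NO k c
  calc D (quadraticSum k c x) - quadraticSum k c (D x)
      = ∑ᶠ i, D (c i • NO i (k - i) x) - ∑ᶠ i, c i • NO i (k - i) (D x) := by
        rw [quadraticSum_apply, quadraticSum_apply, map_finsum D (finite_support x)]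
    _ = ∑ᶠ i, (D (c i • NO i (k - i) x) - c i • NO i (k - i) (D x)) :=
        (finsum_sub_distrib ((finite_support x).fun_comp (map_zero D))
          (finite_support (D x))).symm
    _ = ∑ᶠ i, w • c i • NO i (k - i) x := by
        simp only [map_smul, ← smul_sub, hDx, smul_comm w]
    _ = w • quadraticSum k c x := by rw [quadraticSum_apply, smul_finsum]

/-- The Heisenberg operator `h_n` as a linear map. -/
def heisenberg (n : ℤ) : FockD →ₗ[ℂ] FockD :=
  (1 / 2 : ℂ) • quadraticSum (-2 * n - 1) fun i => (-1) ^ (i + 1)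

theorem heisenberg_apply (n : ℤ) (x : FockD) : heisenberg n x = hD n x := rfl

/-- The energy operator `L^{1/2}_0` as a linear map. -/
def energy : FockD →ₗ[ℂ] FockD :=
  (1 / 2 : ℂ) • quadraticSum (-1) fun i => i

theorem energy_apply (x : FockD) : energy x = LhalfD 0 x := by
  simp only [energy, LinearMap.smul_apply, quadraticSum_apply, LhalfD, neg_sub_comm _ (1 : ℤ),
    neg_zero, zero_sub]

end QuadraticSum

section Energy

/-- The conformal weight `∑_{t ∈ S} (t + 1/2)` of the basis vector `e_S`. -/
def weight (S : Finset ℕ) : ℂ := ∑ t ∈ S, ((t : ℂ) + 1 / 2)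

theorem energy_eD (S : Finset ℕ) : energy (eD S) = weight S • eD S := by
  have pair_eq (t : ℕ) :
      ((t : ℤ) : ℂ) • NO t (-1 - t) (eD S)
          + ((-1 - t : ℤ) : ℂ) • NO (-1 - t) (-1 - (-1 - t)) (eD S)
        = if t ∈ S then (2 * ((t : ℂ) + 1 / 2)) • eD S else 0 := by
    rw [NO, NO, if_pos (by lia), if_neg (by lia), sub_sub_cancel, LinearMap.neg_apply,
      LinearMap.comp_apply, aOp_natCast_aOp_neg_one_sub_eD]
    split_ifs <;> push_cast <;> module
  have sum_eq : quadraticSum (-1) (fun i => i) (eD S)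
      = ∑ t ∈ S, (2 * ((t : ℂ) + 1 / 2)) • eD S := by
    rw [quadraticSum_apply, finsum_int_eq_finsum_nat_add (hasFiniteSupport_smul_NO _ _ _),
      finsum_congr pair_eq, ← finsum_mem_finset_eq_sum]
    exact finsum_congr fun t => (finsum_eq_if).symm
  rw [energy, LinearMap.smul_apply, sum_eq, ← sum_smul, ← mul_sum, smul_smul, weight]
  congr 1
  ring

theorem lie_energy_eq_smul {A : FockD →ₗ[ℂ] FockD} {w : ℂ}
    (hA : ∀ S, energy (A (eD S)) = (weight S + w) • A (eD S)) : ⁅energy, A⁆ = w • A :=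
  hom_ext_s15 fun S => by
    rw [Ring.lie_def, LinearMap.sub_apply, Module.End.mul_apply, Module.End.mul_apply, hA,
      energy_eD, map_smul, add_smul, add_sub_cancel_left, LinearMap.smul_apply]

theorem lie_energy_aOp (m : ℤ) : ⁅energy, aOp m⁆ = ((m : ℂ) + 1 / 2) • aOp m := by
  refine lie_energy_eq_smul fun S => ?_
  obtain ⟨t, rfl | rfl⟩ := exists_eq_natCast_or_eq_neg_one_sub m
  · rw [aOp_natCast_eD]
    split_ifs with ht
    · simp only [map_zero, smul_zero]
    · have weight_insert : weight (insert t S) = weight S + ((t : ℤ) + 1 / 2) := by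
        rw [weight, sum_insert ht, ← weight, add_comm, Int.cast_natCast]
      rw [map_smul, energy_eD, weight_insert, smul_comm]
  · rw [aOp_neg_one_sub_eD]
    split_ifs with ht
    · have weight_erase : weight (S.erase t) = weight S + ((-1 - t : ℤ) + 1 / 2) := by
        rw [weight, sum_erase_eq_sub ht, ← weight]
        push_cast
        ring
      rw [map_smul, energy_eD, weight_erase, smul_comm]
    · simp only [map_zero, smul_zero]

theorem lie_energy_NO (i j : ℤ) : ⁅energy, NO i j⁆ = ((i : ℂ) + j + 1) • NO i j := by
  have aOp_mul (m n : ℤ) : ⁅energy, aOp m * aOp n⁆ = ((m : ℂ) + n + 1) • (aOp m * aOp n) := by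
    convert lie_mul_eq_smul (lie_energy_aOp m) (lie_energy_aOp n) using 2
    ring
  unfold NO
  split_ifs
  · exact aOp_mul i j
  · rw [← neg_one_smul ℂ (aOp j ∘ₗ aOp i), add_comm (i : ℂ)]
    exact lie_smul_eq_smul (aOp_mul j i) (-1)

theorem lie_energy_quadraticSum (k : ℤ) (c : ℤ → ℂ) :
    ⁅energy, quadraticSum k c⁆ = ((k : ℂ) + 1) • quadraticSum k c := by
  refine lie_quadraticSum (fun i => ?_) c
  rw [lie_energy_NO, Int.cast_sub, add_sub_cancel]

theorem lie_energy_heisenberg (m : ℤ) :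
    ⁅energy, heisenberg m⁆ = (-2 * (m : ℂ)) • heisenberg m := by
  have eigenvalue_eq : ((-2 * m - 1 : ℤ) : ℂ) + 1 = -2 * m := by
    push_cast
    ring
  rw [← eigenvalue_eq]
  exact lie_smul_eq_smul (lie_energy_quadraticSum _ _) _

end Energy

section Vacuum

theorem weight_image_two_mul_add (n r : ℕ) :
    weight ((range n).image fun i => 2 * i + r) = (n : ℂ) ^ 2 + (r - 1 / 2) * n := by
  have injective : Function.Injective fun i : ℕ => 2 * i + r := fun i j h => by simpa using h
  rw [weight, sum_image injective.injOn]
  induction n with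
  | zero => simp
  | succ n ih =>
    rw [sum_range_succ, ih]
    push_cast
    ring

theorem weight_vSet (n : ℤ) : weight (vSet n) = (n : ℂ) ^ 2 + (n : ℂ) / 2 := by
  rcases le_or_gt 0 n with hn | hn
  · lift n to ℕ using hn
    rw [vSet, if_pos n.cast_nonneg, Int.toNat_natCast, weight_image_two_mul_add]
    push_cast
    ring
  · obtain ⟨t, rfl⟩ : ∃ t : ℕ, n = -t := ⟨(-n).toNat, by lia⟩
    rw [vSet, if_neg hn.not_ge, neg_neg, Int.toNat_natCast]
    refine (weight_image_two_mul_add t 0).trans ?_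
    push_cast
    ring

end Vacuum

end FockD

/-- For every `m ∈ ℤ` one has `L^{1/2}_0 ∘ h_m − h_m ∘ L^{1/2}_0 = −2m · h_m` on `F`, and
for every `n ∈ ℤ` one has `L^{1/2}_0 v_n = (n² + n/2) v_n`. -/
theorem L0_h_commutator_and_vacuum_eigenvalue :
    (∀ (m : ℤ) (x : FockD),
      LhalfD 0 (hD m x) - hD m (LhalfD 0 x) = (-2 * (m : ℂ)) • hD m x) ∧
    (∀ n : ℤ, LhalfD 0 (vD n) = ((n : ℂ) ^ 2 + (n : ℂ) / 2) • vD n) := by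
  refine ⟨fun m x => ?_, fun n => ?_⟩
  · simp only [← FockD.energy_apply, ← FockD.heisenberg_apply]
    exact LinearMap.congr_fun (FockD.lie_energy_heisenberg m) x
  · rw [← FockD.energy_apply, vD, FockD.energy_eD, FockD.weight_vSet]
end
end
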